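/- arXiv:2212.05455 — 2 statements merged into one kernel-verified Lean document; each statement's English description precedes it below -/
import Mathlib

section
/- Let k ≥ 2 be an integer and let G be a connected graph of order n with n ≥ max{6k+5, k² + (3/2)k + 2}. If the spectral radius satisfies ρ(G) ≥ ρ(K₁ ∨ (K_{n−k−1} + kK₁)), then G has a spanning k-ended-tree, unless G is isomorphic to K₁ ∨ (K_{n−k−1} + kK₁). -/
open Finset
open scoped Classical

/-- The adjacency matrix of a simple graph over ℝ. -/
noncomputable def adjMat {V : Type*} [Fintype V] (G : SimpleGraph V) :
    Matrix V V ℝ := fun i j => if G.Adj i j then 1 else 0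

/-- The spectral radius of a graph: the largest (real) eigenvalue of its
adjacency matrix. -/
noncomputable def specRad {V : Type*} [Fintype V] (G : SimpleGraph V) : ℝ :=
  sSup {μ : ℝ | Module.End.HasEigenvalue (Matrix.mulVecLin (adjMat G)) μ}

/-- The signless Laplacian matrix `Q = D + A` of a simple graph. -/
noncomputable def qMat {V : Type*} [Fintype V] (G : SimpleGraph V) :
    Matrix V V ℝ := fun i j =>
  (if i = j then ((univ.filter fun u => G.Adj i u).card : ℝ) else 0) +
    (if G.Adj i j then 1 else 0)

/-- The signless Laplacian spectral radius of a graph: the largest (real)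
eigenvalue of `Q = D + A`. -/
noncomputable def qRad {V : Type*} [Fintype V] (G : SimpleGraph V) : ℝ :=
  sSup {μ : ℝ | Module.End.HasEigenvalue (Matrix.mulVecLin (qMat G)) μ}

/-- `G` has a spanning `k`-ended-tree: a spanning tree with at most `k`
leaves (vertices of degree 1 in the tree). -/
noncomputable def HasSpanningKEndedTree {V : Type*} [Fintype V]
    (G : SimpleGraph V) (k : ℕ) : Prop :=
  ∃ T : SimpleGraph V, T ≤ G ∧ T.IsTree ∧
    (univ.filter fun v => T.degree v = 1).card ≤ k

/-- `G` has a spanning tree with leaf degree at most `k`: every vertex of the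
tree is adjacent (in the tree) to at most `k` leaves of the tree. -/
noncomputable def HasSpanningTreeLeafDegLE {V : Type*} [Fintype V]
    (G : SimpleGraph V) (k : ℕ) : Prop :=
  ∃ T : SimpleGraph V, T ≤ G ∧ T.IsTree ∧
    ∀ v, (univ.filter fun u => T.Adj v u ∧ T.degree u = 1).card ≤ k

/-- The graph `K₁ ∨ (K_{n-k-1} + kK₁)` on `n` vertices: vertex `0` is joined to
everything, vertices `0, …, n-k-1` form a clique `K_{n-k}`, and the last `k`
vertices are only adjacent to vertex `0`. -/
def oneJoinCliquePlusIso (n k : ℕ) : SimpleGraph (Fin n) :=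
  SimpleGraph.fromRel fun i j => i.val = 0 ∨ (i.val < n - k ∧ j.val < n - k)


namespace KEnd

/-- Degree, as the number of neighbours. -/
noncomputable def dg {V : Type*} [Fintype V] (F : SimpleGraph V) (u : V) : ℕ :=
  (univ.filter fun v => F.Adj u v).card

/-- A path with `N` vertices from `a` to `b`. -/
def HP {V : Type*} (F : SimpleGraph V) (a b : V) (N : ℕ) : Prop :=
  ∃ p : ℕ → V, (∀ i < N, ∀ j < N, p i = p j → i = j) ∧ p 0 = a ∧ p (N - 1) = b ∧
    ∀ m, m + 1 < N → F.Adj (p m) (p (m + 1))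

lemma rev_path {V : Type*} {F : SimpleGraph V} {N : ℕ} (p : ℕ → V)
    (hinj : ∀ i < N, ∀ j < N, p i = p j → i = j) {i j : ℕ} (hij : i < j) (hj : j + 1 < N)
    (hadj : ∀ m, m + 1 < N → m ≠ i → m ≠ j → F.Adj (p m) (p (m + 1)))
    (h1 : F.Adj (p i) (p j)) (h2 : F.Adj (p (i + 1)) (p (j + 1))) :
    HP F (p 0) (p (N - 1)) N := by
  refine ⟨fun m => if i < m ∧ m ≤ j then p (i + 1 + j - m) else p m, ?_, ?_, ?_, ?_⟩
  · intro x hx y hy hxy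
    simp only at hxy
    split_ifs at hxy with c1 c2 c2
    · have := hinj _ (by omega) _ (by omega) hxy
      omega
    · have := hinj _ (by omega) _ (by omega) hxy
      omega
    · have := hinj _ (by omega) _ (by omega) hxy
      omega
    · exact hinj _ hx _ hy hxy
  · simp
  · simp only
    rw [if_neg (by omega)]
  · intro m hm
    simp only
    by_cases c1 : m < i
    · rw [if_neg (by omega), if_neg (by omega)]
      exact hadj m hm (by omega) (by omega)
    by_cases c2 : m = i
    · subst c2
      rw [if_neg (by omega), if_pos (by omega)]
      convert h1 using 2
      omega
    by_cases c3 : m < j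
    · rw [if_pos (by omega), if_pos (by omega)]
      have := hadj (i + 1 + j - (m + 1)) (by omega) (by omega) (by omega)
      rw [show i + 1 + j - (m + 1) + 1 = i + 1 + j - m by omega] at this
      exact this.symm
    by_cases c4 : m = j
    · subst c4
      rw [if_pos (by omega), if_neg (by omega)]
      convert h2 using 2
      omega
    · rw [if_neg (by omega), if_neg (by omega)]
      exact hadj m hm (by omega) (by omega)

lemma surj_of_inj {V : Type*} [Fintype V] (p : ℕ → V)
    (hinj : ∀ i < Fintype.card V, ∀ j < Fintype.card V, p i = p j → i = j) (x : V) :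
    ∃ i < Fintype.card V, p i = x := by
  have h : (range (Fintype.card V)).image p = univ := by
    apply Finset.eq_univ_of_card
    rw [Finset.card_image_of_injOn, card_range]
    intro i hi j hj h
    exact hinj i (by simpa using hi) j (by simpa using hj) h
  have := mem_univ x
  rw [← h, mem_image] at this
  obtain ⟨i, hi, h⟩ := this
  exact ⟨i, by simpa using hi, h⟩

lemma closure_aux {V : Type*} [Fintype V] {F : SimpleGraph V} (p : ℕ → V)
    (hinj : ∀ i < Fintype.card V, ∀ j < Fintype.card V, p i = p j → i = j)
    {i : ℕ} (hi : i + 1 < Fintype.card V)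
    (hadj : ∀ m, m + 1 < Fintype.card V → m ≠ i → F.Adj (p m) (p (m + 1)))
    (hd : Fintype.card V + 1 ≤ dg F (p i) + dg F (p (i + 1))) :
    HP F (p 0) (p (Fintype.card V - 1)) (Fintype.card V) := by
  set N := Fintype.card V with hN
  set I := (range (N - 1)).erase i with hI
  have hIc : I.card = N - 2 := by
    rw [hI, card_erase_of_mem (by simp; omega), card_range]; omega
  set X := I.filter fun j => F.Adj (p i) (p j) with hX
  set Y := I.filter fun j => F.Adj (p (i + 1)) (p (j + 1)) with hY
  have hXc : dg F (p i) ≤ X.card + 1 := by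
    have : (univ.filter fun v => F.Adj (p i) v) ⊆ insert (p (N - 1)) (X.image p) := by
      intro v hv
      simp only [mem_filter, mem_univ, true_and] at hv
      obtain ⟨j, hj, rfl⟩ := surj_of_inj p hinj v
      by_cases hjN : j = N - 1
      · simp [hjN]
      · refine mem_insert_of_mem (mem_image_of_mem _ ?_)
        simp only [hX, hI, mem_filter, mem_erase, mem_range]
        refine ⟨⟨?_, by omega⟩, hv⟩
        rintro rfl
        exact F.loopless.irrefl _ hv
    calc dg F (p i) ≤ _ := card_le_card this
      _ ≤ _ := card_insert_le _ _
      _ ≤ _ := by gcongr; exact card_image_le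
  have hYc : dg F (p (i + 1)) ≤ Y.card + 1 := by
    have : (univ.filter fun v => F.Adj (p (i + 1)) v) ⊆
        insert (p 0) (Y.image fun j => p (j + 1)) := by
      intro v hv
      simp only [mem_filter, mem_univ, true_and] at hv
      obtain ⟨j, hj, rfl⟩ := surj_of_inj p hinj v
      rcases j with _ | j
      · simp
      · refine mem_insert_of_mem (mem_image.2 ⟨j, ?_, rfl⟩)
        simp only [hY, hI, mem_filter, mem_erase, mem_range]
        refine ⟨⟨?_, by omega⟩, hv⟩
        rintro rfl
        exact F.loopless.irrefl _ hv
    calc dg F (p (i + 1)) ≤ _ := card_le_card this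
      _ ≤ _ := card_insert_le _ _
      _ ≤ _ := by gcongr; exact card_image_le
  have hne : (X ∩ Y).Nonempty := by
    rw [← card_pos]
    have h1 := card_union_add_card_inter X Y
    have h2 : (X ∪ Y).card ≤ I.card :=
      card_le_card (union_subset (filter_subset _ _) (filter_subset _ _))
    omega
  obtain ⟨j, hj⟩ := hne
  simp only [hX, hY, hI, mem_inter, mem_filter, mem_erase, mem_range] at hj
  obtain ⟨⟨⟨hji, hjN⟩, hj1⟩, -, hj2⟩ := hj
  rcases lt_or_gt_of_ne hji with h | h
  · exact rev_path p hinj h hi (fun m hm _ h2 => hadj m hm h2) hj1.symm hj2.symm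
  · exact rev_path p hinj h (by omega) (fun m hm h2 _ => hadj m hm h2) hj1 hj2

lemma closure_step {V : Type*} [Fintype V] {F : SimpleGraph V} {u v a b : V}
    (hd : Fintype.card V + 1 ≤ dg F u + dg F v)
    (h : HP (F ⊔ SimpleGraph.edge u v) a b (Fintype.card V)) : HP F a b (Fintype.card V) := by
  obtain ⟨p, hinj, rfl, rfl, hadj⟩ := h
  by_cases hall : ∀ m, m + 1 < Fintype.card V → F.Adj (p m) (p (m + 1))
  · exact ⟨p, hinj, rfl, rfl, hall⟩
  push Not at hall
  obtain ⟨i, hi, hni⟩ := hall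
  have key : ∀ m, m + 1 < Fintype.card V → F.Adj (p m) (p (m + 1)) ∨
      (p m = u ∧ p (m + 1) = v) ∨ (p m = v ∧ p (m + 1) = u) := by
    intro m hm
    have := hadj m hm
    rw [SimpleGraph.sup_adj, SimpleGraph.edge_adj] at this
    tauto
  have hother : ∀ m, m + 1 < Fintype.card V → m ≠ i → F.Adj (p m) (p (m + 1)) := by
    intro m hm hmi
    rcases key m hm with h | h
    · exact h
    exfalso
    rcases key i hi with h' | h'
    · exact hni h'
    have e : (p m = p i ∧ p (m + 1) = p (i + 1)) ∨ (p m = p (i + 1) ∧ p (m + 1) = p i) := by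
      rcases h with ⟨h1, h2⟩ | ⟨h1, h2⟩ <;> rcases h' with ⟨h3, h4⟩ | ⟨h3, h4⟩ <;>
        simp [h1, h2, h3, h4]
    rcases e with ⟨e1, _⟩ | ⟨e1, e2⟩
    · exact hmi (hinj _ (by omega) _ (by omega) e1)
    · have := hinj _ (by omega) _ (by omega) e1
      have := hinj _ (by omega) _ (by omega) e2
      omega
  apply closure_aux p hinj hi hother
  rcases key i hi with h' | ⟨h1, h2⟩ | ⟨h1, h2⟩
  · exact absurd h' hni
  · rw [h1, h2]; exact hd
  · rw [h1, h2]; omega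

lemma complete_HP {V : Type*} [Fintype V] {a b : V} (hab : a ≠ b) :
    HP (⊤ : SimpleGraph V) a b (Fintype.card V) := by
  have hc : 1 < Fintype.card V := Fintype.one_lt_card_iff.2 ⟨a, b, hab⟩
  let e := (Fintype.equivFin V).symm
  let z : Fin (Fintype.card V) := ⟨0, by omega⟩
  let l : Fin (Fintype.card V) := ⟨Fintype.card V - 1, by omega⟩
  have hzl : z ≠ l := by
    simp only [z, l, ne_eq, Fin.mk.injEq]; omega
  let e1 := e.trans (Equiv.swap (e z) a)
  have h1 : e1 z = a := by simp [e1]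
  let e2 := e1.trans (Equiv.swap (e1 l) b)
  have h2 : e2 l = b := by simp [e2]
  have h3 : e2 z = a := by
    simp only [e2, Equiv.trans_apply]
    rw [Equiv.swap_apply_of_ne_of_ne, h1]
    · exact fun h => hzl (e1.injective h)
    · rw [h1]; exact hab
  refine ⟨fun m => if h : m < Fintype.card V then e2 ⟨m, h⟩ else a, ?_, ?_, ?_, ?_⟩
  · intro i hi j hj h
    simp only [hi, hj, dif_pos] at h
    simpa using e2.injective h
  · simp only
    rw [dif_pos (by omega)]; exact h3
  · simp only
    rw [dif_pos (by omega)]; exact h2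
  · intro m hm
    simp only
    rw [dif_pos (by omega), dif_pos hm, SimpleGraph.top_adj]
    intro h
    have := e2.injective h
    simp at this

/-- Ore-type degree information for graphs that are edge-maximal without an `a`-`b` path. -/
lemma exists_maximal_graph {V : Type*} [Fintype V] (F : SimpleGraph V) {a b : V} (hab : a ≠ b)
    (hF : ¬ HP F a b (Fintype.card V)) :
    ∃ F' : SimpleGraph V, F ≤ F' ∧ (∃ u v, u ≠ v ∧ ¬ F'.Adj u v) ∧
      ∀ u v, u ≠ v → ¬ F'.Adj u v → dg F' u + dg F' v ≤ Fintype.card V := by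
  obtain ⟨F', hle, hmax⟩ := Set.Finite.exists_le_maximal
    (Set.toFinite {H : SimpleGraph V | ¬ HP H a b (Fintype.card V)}) hF
  refine ⟨F', hle, ?_, ?_⟩
  · by_contra hcon
    push Not at hcon
    apply hmax.1
    have : F' = ⊤ := by
      ext x y
      simp only [SimpleGraph.top_adj]
      exact ⟨fun h => h.ne, fun h => hcon x y h⟩
    rw [this]
    exact complete_HP hab
  · intro u v huv hn
    by_contra hlt
    push Not at hlt
    apply hmax.1
    apply closure_step (u := u) (v := v) hlt
    by_contra hno
    have := hmax.2 (y := F' ⊔ SimpleGraph.edge u v) hno le_sup_left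
    apply hn
    apply this
    simp [SimpleGraph.edge_adj, huv]

lemma dg_mono {V : Type*} [Fintype V] {F F' : SimpleGraph V} (h : F ≤ F') (u : V) :
    dg F u ≤ dg F' u := by
  apply card_le_card
  intro x
  simp only [mem_filter, mem_univ, true_and]
  exact fun hx => h hx

lemma sum_two_level {V : Type*} [Fintype V] (c : V → ℤ) (hc : ∀ x, 0 ≤ c x) (A W : Finset V)
    (α β : ℤ) (hβ : 0 ≤ β) (hA : ∀ x ∈ A, α ≤ c x) (hW : ∀ x ∈ W, β ≤ c x) :
    (A.card : ℤ) * α + ((W.card : ℤ) - A.card) * β ≤ ∑ x, c x := by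
  have h1 : (A.card : ℤ) * α ≤ ∑ x ∈ A, c x := by
    have := Finset.card_nsmul_le_sum A c α hA
    simpa using this
  have h2 : ((W \ A).card : ℤ) * β ≤ ∑ x ∈ W \ A, c x := by
    have := Finset.card_nsmul_le_sum (W \ A) c β (fun x hx => hW x (mem_sdiff.1 hx).1)
    simpa using this
  have h3 : ∑ x ∈ A, c x + ∑ x ∈ W \ A, c x ≤ ∑ x, c x := by
    rw [← sum_union disjoint_sdiff]
    exact sum_le_sum_of_subset_of_nonneg (subset_univ _) (fun x _ _ => hc x)
  have h4 : (W.card : ℤ) - A.card ≤ (W \ A).card := by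
    have := Finset.le_card_sdiff A W
    omega
  nlinarith [mul_le_mul_of_nonneg_right h4 hβ]

lemma card_nonnbr {V : Type*} [Fintype V] (F : SimpleGraph V) (u : V) :
    (univ.filter fun x => ¬ F.Adj u x).card + dg F u = Fintype.card V := by
  unfold dg
  have := Finset.card_filter_add_card_filter_not (s := (univ : Finset V)) (fun x => F.Adj u x)
  rw [card_univ] at this
  omega

lemma dg_lt {V : Type*} [Fintype V] (F : SimpleGraph V) (u : V) :
    dg F u + 1 ≤ Fintype.card V := by
  have := card_nonnbr F u
  have : 0 < (univ.filter fun x => ¬ F.Adj u x).card := card_pos.2 ⟨u, by simp⟩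
  omega

lemma ham_count {V : Type*} [Fintype V] (F : SimpleGraph V) {a b : V} (hab : a ≠ b)
    (hN : 4 ≤ Fintype.card V) (hF : ¬ HP F a b (Fintype.card V)) :
    ∃ h : ℕ, 2 ≤ h ∧ 2 * h ≤ Fintype.card V ∧ (∃ u, dg F u ≤ h) ∧
      ((h : ℤ) - 1) * (2 * (Fintype.card V : ℤ) - 3 * h) ≤
        ∑ x, ((Fintype.card V : ℤ) - 1 - dg F x) := by
  obtain ⟨F', hle, ⟨u0, v0, huv0, hn0⟩, hore⟩ := exists_maximal_graph F hab hF
  set N := Fintype.card V with hNdef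
  suffices H : ∃ h : ℕ, 2 ≤ h ∧ 2 * h ≤ N ∧ (∃ u, dg F' u ≤ h) ∧
      ((h : ℤ) - 1) * (2 * (N : ℤ) - 3 * h) ≤ ∑ x, ((N : ℤ) - 1 - dg F' x) by
    obtain ⟨h, h1, h2, ⟨u, hu⟩, h4⟩ := H
    refine ⟨h, h1, h2, ⟨u, (dg_mono hle u).trans hu⟩, h4.trans ?_⟩
    apply sum_le_sum
    intro x _
    have := dg_mono hle x
    omega
  obtain ⟨⟨u, v⟩, huvm, hmax⟩ := Finset.exists_max_image
    (univ.filter fun q : V × V => q.1 ≠ q.2 ∧ ¬ F'.Adj q.1 q.2)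
    (fun q => dg F' q.1 + dg F' q.2) ⟨(u0, v0), by simp [huv0, hn0]⟩
  simp only [mem_filter, mem_univ, true_and, Prod.forall] at huvm hmax
  obtain ⟨huv, hn⟩ := huvm
  wlog hdd : dg F' u ≤ dg F' v generalizing u v
  · exact this v u (fun x y hxy => by rw [add_comm (dg F' v)]; exact hmax x y hxy) huv.symm
      (fun h => hn h.symm) (by omega)
  have hsum := hore u v huv hn
  have hc : ∀ x, (0 : ℤ) ≤ (N : ℤ) - 1 - dg F' x := fun x => by
    have := dg_lt F' x
    omega
  have hW := card_nonnbr F' u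
  have hA := card_nonnbr F' v
  set W := univ.filter fun x => ¬ F'.Adj u x with hWdef
  by_cases hh : 2 ≤ dg F' u
  · refine ⟨dg F' u, hh, by omega, ⟨u, le_rfl⟩, ?_⟩
    have hAc : dg F' u - 1 ≤ ((univ.filter fun x => ¬ F'.Adj v x).erase v).card := by
      rw [card_erase_of_mem (by simp)]
      omega
    obtain ⟨A, hAs, hAcard⟩ := Finset.exists_subset_card_eq hAc
    have := sum_two_level (fun x => (N : ℤ) - 1 - dg F' x) hc A W (N - 1 - dg F' u)
      (dg F' u - 1) (by omega) ?_ ?_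
    · rw [hAcard] at this
      refine le_trans (le_of_eq ?_) this
      have e1 : ((dg F' u - 1 : ℕ) : ℤ) = (dg F' u : ℤ) - 1 := by omega
      have e2 : (W.card : ℤ) = N - dg F' u := by omega
      rw [e1, e2]
      ring
    · intro x hx
      have := hAs hx
      simp only [mem_erase, mem_filter, mem_univ, true_and] at this
      have h1 := hmax x v ⟨this.1, fun h => this.2 h.symm⟩
      omega
    · intro x hx
      simp only [hWdef, mem_filter, mem_univ, true_and] at hx
      by_cases hxu : u = x
      · subst hxu
        omega
      · have h1 := hmax u x ⟨hxu, hx⟩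
        omega
  · refine ⟨2, le_rfl, by omega, ⟨u, by omega⟩, ?_⟩
    have := sum_two_level (fun x => (N : ℤ) - 1 - dg F' x) hc {u} W (N - 2) 1 (by omega) ?_ ?_
    · simp only [card_singleton] at this
      push_cast at this ⊢
      have e2 : (W.card : ℤ) = N - dg F' u := by omega
      rw [e2] at this
      omega
    · intro x hx
      rw [mem_singleton] at hx
      subst hx
      omega
    · intro x hx
      simp only [hWdef, mem_filter, mem_univ, true_and] at hx
      by_cases hxu : u = x
      · subst hxu
        omega
      · have h1 := card_nonnbr F' x
        have h2 : 2 ≤ (univ.filter fun y => ¬ F'.Adj x y).card := by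
          rw [← Finset.card_pair hxu]
          apply card_le_card
          intro y hy
          simp only [mem_insert, mem_singleton] at hy
          simp only [mem_filter, mem_univ, true_and]
          rcases hy with rfl | rfl
          · exact fun h => hx h.symm
          · exact F'.loopless.irrefl _
        omega

/-- Degree into a finset. -/
noncomputable def dC {V : Type*} (G : SimpleGraph V) (C : Finset V) (u : V) : ℕ :=
  (C.filter fun v => G.Adj u v).card

lemma dC_erase_le {V : Type*} (G : SimpleGraph V) (C : Finset V) (u v : V) :
    dC G C u ≤ dC G (C.erase v) u + 1 := by
  unfold dC
  rw [Finset.filter_erase]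
  have := Finset.pred_card_le_card_erase (s := C.filter fun w => G.Adj u w) (a := v)
  omega

lemma sum_dC_erase {V : Type*} (G : SimpleGraph V) (C : Finset V) {v : V} (hv : v ∈ C) :
    ∑ x ∈ C, dC G C x = ∑ x ∈ C.erase v, dC G (C.erase v) x + 2 * dC G C v := by
  have h1 : ∀ x, dC G C x = dC G (C.erase v) x + if G.Adj x v then 1 else 0 := by
    intro x
    unfold dC
    rw [Finset.filter_erase]
    by_cases h : G.Adj x v
    · rw [if_pos h, Finset.card_erase_add_one (by simp [hv, h])]
    · rw [if_neg h, Finset.erase_eq_of_notMem (by simp [h])]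
      rfl
  rw [← Finset.add_sum_erase C _ hv, Finset.sum_congr rfl (fun x _ => h1 x), sum_add_distrib,
    ← Finset.card_filter]
  have h2 : ((C.erase v).filter fun x => G.Adj x v).card = dC G C v := by
    unfold dC
    congr 1
    ext x
    simp only [mem_filter, mem_erase]
    constructor
    · rintro ⟨⟨_, h⟩, h'⟩
      exact ⟨h, h'.symm⟩
    · rintro ⟨h, h'⟩
      exact ⟨⟨h'.ne', h⟩, h'.symm⟩
  rw [h2]
  ring

lemma greedy {V : Type*} (G : SimpleGraph V) (C : Finset V) (k : ℕ) (hk : k ≤ C.card) :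
    ∃ D ⊆ C, D.card + k = C.card ∧ ∀ u ∈ D,
      ∑ x ∈ C, dC G C x ≤ ∑ x ∈ D, dC G D x + 2 * k * dC G D u + k * (k + 1) := by
  induction k with
  | zero => exact ⟨C, subset_rfl, rfl, by simp⟩
  | succ k ih =>
    obtain ⟨D, hDC, hc, hD⟩ := ih (by omega)
    have hne : D.Nonempty := by rw [← card_pos]; omega
    obtain ⟨v, hv, hmin⟩ := Finset.exists_min_image D (dC G D) hne
    refine ⟨D.erase v, (erase_subset _ _).trans hDC, ?_, ?_⟩
    · have := Finset.card_erase_add_one hv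
      omega
    · intro u hu
      have h1 := hD u (mem_of_mem_erase hu)
      have h2 := dC_erase_le G D u v
      have h3 := sum_dC_erase G D hv
      have h4 := hmin u (mem_of_mem_erase hu)
      have h5 : 2 * k * dC G D u ≤ 2 * k * (dC G (D.erase v) u + 1) := Nat.mul_le_mul_left _ h2
      rw [h3] at h1
      nlinarith

lemma numeric {N k h : ℤ} (hk : 2 ≤ k) (h2 : 2 ≤ h) (hN : 2 * h ≤ N) (hN1 : 5 * k + 5 ≤ N)
    (hN2 : 2 * k ^ 2 + k + 4 ≤ 2 * N)
    (hle : (h - 1) * (2 * N - 3 * h) ≤ 2 * k * h + k ^ 2) : False := by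
  -- concavity in `h` on `[2, N / 2]`
  have e1 : 0 < 2 * N - 6 - 4 * k - k ^ 2 := by nlinarith
  have e2 : 0 < N * (N - 4 * k - 2) - 4 * k ^ 2 := by nlinarith
  have hx : 0 ≤ h - 2 := by linarith
  have hy : 0 ≤ N - 2 * h := by linarith
  have key : 4 * (N - 4) * ((h - 1) * (2 * N - 3 * h) - (2 * k * h + k ^ 2)) =
      4 * (N - 2 * h) * (2 * N - 6 - 4 * k - k ^ 2)
        + 2 * (h - 2) * (N * (N - 4 * k - 2) - 4 * k ^ 2)
        + 6 * (N - 4) * ((h - 2) * (N - 2 * h)) := by ring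
  have hpos : 0 < 4 * (N - 2 * h) * (2 * N - 6 - 4 * k - k ^ 2)
        + 2 * (h - 2) * (N * (N - 4 * k - 2) - 4 * k ^ 2) := by
    have t1 : 0 ≤ (N - 2 * h) * (2 * N - 6 - 4 * k - k ^ 2) := mul_nonneg hy e1.le
    have t2 : 0 ≤ (h - 2) * (N * (N - 4 * k - 2) - 4 * k ^ 2) := mul_nonneg hx e2.le
    rcases hx.lt_or_eq with h' | h'
    · have := mul_pos h' e2
      linarith
    · have h'' : 0 < N - 2 * h := by linarith
      have := mul_pos h'' e1
      linarith
  have t3 : 0 ≤ (N - 4) * ((h - 2) * (N - 2 * h)) :=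
    mul_nonneg (by linarith) (mul_nonneg hx hy)
  have t4 : (N - 4) * ((h - 1) * (2 * N - 3 * h) - (2 * k * h + k ^ 2)) ≤ 0 :=
    mul_nonpos_of_nonneg_of_nonpos (by linarith) (by linarith)
  linarith

lemma dg_sub {V : Type*} (G : SimpleGraph V) (D : Finset V) (u : {x // x ∈ D}) :
    dg (G.comap (Subtype.val : {x // x ∈ D} → V)) u = dC G D u.1 := by
  unfold dg dC
  rw [← Finset.card_map (Function.Embedding.subtype _)]
  congr 1
  ext x
  simp only [mem_map, mem_filter, mem_univ, true_and, SimpleGraph.comap_adj,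
    Function.Embedding.subtype_apply, Subtype.exists, exists_and_right, exists_eq_right]
  constructor
  · rintro ⟨h1, h2⟩
    exact ⟨h1, h2⟩
  · rintro ⟨h1, h2⟩
    exact ⟨h1, h2⟩

lemma core_ham {V : Type*} [Fintype V] (G : SimpleGraph V) {k : ℕ} (hk : 2 ≤ k)
    (hn1 : 6 * k + 5 ≤ Fintype.card V) (hn2 : 2 * k ^ 2 + 3 * k + 4 ≤ 2 * Fintype.card V)
    (hsum : ((Fintype.card V : ℤ) - k - 1) ^ 2 + Fintype.card V - 1 ≤ ∑ x, (dg G x : ℤ)) :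
    ∃ D : Finset V, D.card + k = Fintype.card V ∧ ∀ a ∈ D, ∀ b ∈ D, a ≠ b →
      ∃ p : ℕ → V, (∀ i < D.card, ∀ j < D.card, p i = p j → i = j) ∧ p 0 = a ∧
        p (D.card - 1) = b ∧ (∀ i < D.card, p i ∈ D) ∧
        ∀ m, m + 1 < D.card → G.Adj (p m) (p (m + 1)) := by
  obtain ⟨D, -, hc, hD⟩ := greedy G univ k (by rw [card_univ]; omega)
  rw [card_univ] at hc
  refine ⟨D, hc, ?_⟩
  intro a ha b hb hab
  set F := G.comap (Subtype.val : {x // x ∈ D} → V) with hF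
  have hcard : Fintype.card {x // x ∈ D} = D.card := Fintype.card_coe D
  have hHP : HP F ⟨a, ha⟩ ⟨b, hb⟩ (Fintype.card {x // x ∈ D}) := by
    by_contra hno
    obtain ⟨h, h2, hhN, ⟨u, hu⟩, hle⟩ := ham_count F (fun h => hab (congrArg Subtype.val h))
      (by omega) hno
    have hDu := hD u.1 u.2
    rw [dg_sub] at hu
    have e1 : ∑ x, ((Fintype.card {x // x ∈ D} : ℤ) - 1 - dg F x) =
        (D.card : ℤ) * (D.card - 1) - ∑ x ∈ D, (dC G D x : ℤ) := by
      rw [sum_sub_distrib, sum_const, card_univ, hcard]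
      congr 1
      rw [← Finset.sum_coe_sort D]
      apply sum_congr rfl
      intro x _
      rw [dg_sub]
    have e2 : (∑ x, (dg G x : ℤ)) = ∑ x ∈ univ, (dC G univ x : ℤ) := rfl
    have hDu' : (∑ x ∈ univ, (dC G univ x : ℤ)) ≤
        ∑ x ∈ D, (dC G D x : ℤ) + 2 * k * dC G D u.1 + k * (k + 1) := by exact_mod_cast hDu
    rw [e1, hcard] at hle
    rw [hcard] at hhN
    have hu' : (2 * k * dC G D u.1 : ℤ) ≤ 2 * k * h := by
      have : (dC G D u.1 : ℤ) ≤ h := by exact_mod_cast hu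
      exact mul_le_mul_of_nonneg_left this (by positivity)
    have hcc : (Fintype.card V : ℤ) = D.card + k := by exact_mod_cast hc.symm
    rw [e2] at hsum
    rw [hcc] at hsum
    apply numeric (N := D.card) (k := k) (h := h) (by exact_mod_cast hk) (by exact_mod_cast h2)
      (by exact_mod_cast hhN) (by omega)
    · have : (2 * k ^ 2 + 3 * k + 4 : ℤ) ≤ 2 * Fintype.card V := by exact_mod_cast hn2
      linarith
    · nlinarith
  obtain ⟨p, hinj, h0, h1, hadj⟩ := hHP
  rw [hcard] at hinj h1 hadj
  refine ⟨fun i => (p i).1, ?_, by simp [h0], by simp [h1], fun i _ => (p i).2, ?_⟩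
  · intro i hi j hj h
    exact hinj i hi j hj (Subtype.ext h)
  · intro m hm
    exact hadj m hm

lemma path_acyclic {V : Type*} (G : SimpleGraph V) (p : ℕ → V) (m : ℕ)
    (hinj : ∀ i < m + 1, ∀ j < m + 1, p i = p j → i = j)
    (hadj : ∀ i, i + 1 < m + 1 → G.Adj (p i) (p (i + 1))) :
    ∃ H ≤ G, H.IsAcyclic ∧ (∀ i, i + 1 < m + 1 → H.Adj (p i) (p (i + 1))) ∧
      ∀ x y, H.Adj x y → ∃ i < m + 1, y = p i := by
  induction m with
  | zero =>
    exact ⟨⊥, bot_le, SimpleGraph.isAcyclic_bot, fun i hi => by omega, fun x y h => by simp at h⟩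
  | succ m ih =>
    obtain ⟨H, hHG, hac, hH, hsupp⟩ := ih
      (fun i hi j hj => hinj i (by omega) j (by omega)) (fun i hi => hadj i (by omega))
    refine ⟨H ⊔ SimpleGraph.edge (p m) (p (m + 1)), ?_, ?_, ?_, ?_⟩
    · apply sup_le hHG
      intro x y hxy
      rw [SimpleGraph.edge_adj] at hxy
      have := hadj m (by omega)
      rcases hxy with ⟨⟨rfl, rfl⟩ | ⟨rfl, rfl⟩, _⟩
      · exact this
      · exact this.symm
    · apply SimpleGraph.IsAcyclic.sup_edge_of_not_reachable _ hac
      rintro ⟨w⟩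
      have hne : p m ≠ p (m + 1) := (hadj m (by omega)).ne
      have hw : ¬ w.Nil := SimpleGraph.Walk.not_nil_of_ne hne
      have := w.adj_penultimate hw
      obtain ⟨i, hi, he⟩ := hsupp _ _ this
      have := hinj _ (by omega) _ (by omega) he
      omega
    · intro i hi
      rw [SimpleGraph.sup_adj]
      by_cases h : i = m
      · subst h
        right
        rw [SimpleGraph.edge_adj]
        exact ⟨Or.inl ⟨rfl, rfl⟩, (hadj i (by omega)).ne⟩
      · exact Or.inl (hH i (by omega))
    · intro x y hxy
      rw [SimpleGraph.sup_adj, SimpleGraph.edge_adj] at hxy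
      rcases hxy with h | ⟨⟨_, rfl⟩ | ⟨_, rfl⟩, _⟩
      · obtain ⟨i, hi, h⟩ := hsupp x y h
        exact ⟨i, by omega, h⟩
      · exact ⟨m + 1, by omega, rfl⟩
      · exact ⟨m, by omega, rfl⟩

lemma tree_of_path {V : Type*} [Fintype V] (G : SimpleGraph V) (hG : G.Connected) (p : ℕ → V)
    (m k : ℕ) (hinj : ∀ i < m + 1, ∀ j < m + 1, p i = p j → i = j)
    (hadj : ∀ i, i + 1 < m + 1 → G.Adj (p i) (p (i + 1)))
    (hm : Fintype.card V + 1 ≤ m + k) (hm1 : 1 ≤ m) : HasSpanningKEndedTree G k := by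
  obtain ⟨H, hHG, hac, hH, -⟩ := path_acyclic G p m hinj hadj
  obtain ⟨T, hHT, hTG, hT⟩ := hG.exists_isTree_le_of_le_of_isAcyclic hHG hac
  refine ⟨T, hTG, hT, ?_⟩
  set I := (Finset.Ico 1 m).image p with hI
  have hIc : I.card = m - 1 := by
    rw [hI, card_image_of_injOn, Nat.card_Ico]
    intro i hi j hj h
    simp only [coe_Ico, Set.mem_Ico] at hi hj
    exact hinj i (by omega) j (by omega) h
  have hsub : (univ.filter fun v => T.degree v = 1) ⊆ univ \ I := by
    intro v hv
    simp only [mem_filter, mem_univ, true_and] at hv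
    simp only [mem_sdiff, mem_univ, true_and, hI, mem_image, mem_Ico, not_exists, not_and]
    rintro i ⟨hi1, hi2⟩ rfl
    have a1 : T.Adj (p i) (p (i + 1)) := hHT (hH i (by omega))
    have a2 : T.Adj (p i) (p (i - 1)) := by
      have := hHT (hH (i - 1) (by omega))
      rw [show i - 1 + 1 = i by omega] at this
      exact this.symm
    have hne : p (i + 1) ≠ p (i - 1) := by
      intro h
      have := hinj _ (by omega) _ (by omega) h
      omega
    have : 2 ≤ T.degree (p i) := by
      rw [← Finset.card_pair hne, ← SimpleGraph.card_neighborFinset_eq_degree]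
      apply card_le_card
      intro y hy
      simp only [mem_insert, mem_singleton] at hy
      rw [SimpleGraph.mem_neighborFinset]
      rcases hy with rfl | rfl
      · exact a1
      · exact a2
    omega
  have h1 := card_le_card hsub
  rw [card_sdiff_of_subset (subset_univ _), card_univ, hIc] at h1
  omega

/-- `y` is an eigenvector-like function of the adjacency operator. -/
def IsEig {V : Type*} [Fintype V] (G : SimpleGraph V) (μ : ℝ) (y : V → ℝ) : Prop :=
  ∀ i, ∑ j ∈ univ.filter (fun j => G.Adj i j), y j = μ * y i

lemma adjMat_mulVec {V : Type*} [Fintype V] (G : SimpleGraph V) (y : V → ℝ) (i : V) :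
    (adjMat G).mulVec y i = ∑ j ∈ univ.filter (fun j => G.Adj i j), y j := by
  rw [Matrix.mulVec, dotProduct, sum_filter]
  apply sum_congr rfl
  intro j _
  unfold adjMat
  split_ifs <;> simp

lemma specRad_ge {V : Type*} [Fintype V] (G : SimpleGraph V) {μ : ℝ} {y : V → ℝ} (hy : y ≠ 0)
    (h : IsEig G μ y) : μ ≤ specRad G := by
  unfold specRad
  apply le_csSup (Module.End.finite_hasEigenvalue _).bddAbove
  apply Module.End.hasEigenvalue_of_hasEigenvector (x := y)
  refine ⟨?_, hy⟩
  rw [Module.End.mem_eigenspace_iff]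
  ext i
  rw [Matrix.mulVecLin_apply, adjMat_mulVec, h i]
  simp

lemma specRad_eig {V : Type*} [Fintype V] (G : SimpleGraph V) (hpos : 0 < specRad G) :
    ∃ y : V → ℝ, y ≠ 0 ∧ IsEig G (specRad G) y := by
  have hne : {μ : ℝ | Module.End.HasEigenvalue (Matrix.mulVecLin (adjMat G)) μ}.Nonempty := by
    by_contra h
    rw [Set.not_nonempty_iff_eq_empty] at h
    unfold specRad at hpos
    rw [h, Real.sSup_empty] at hpos
    exact lt_irrefl _ hpos
  have hmem : Module.End.HasEigenvalue (Matrix.mulVecLin (adjMat G)) (specRad G) :=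
    hne.csSup_mem (Module.End.finite_hasEigenvalue _)
  obtain ⟨y, hy⟩ := hmem.exists_hasEigenvector
  refine ⟨y, hy.2, fun i => ?_⟩
  have := congrFun (Module.End.mem_eigenspace_iff.1 hy.1) i
  rw [Matrix.mulVecLin_apply, adjMat_mulVec] at this
  simpa using this

lemma exists_max_ratio {V : Type*} [Fintype V] {y : V → ℝ} (hy : y ≠ 0) (z : V → ℝ)
    (hz : ∀ i, 0 < z i) :
    ∃ (c : ℝ) (i : V), 0 < c ∧ |y i| = c * z i ∧ ∀ j, |y j| ≤ c * z j := by
  obtain ⟨j0, hj0⟩ := Function.ne_iff.1 hy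
  obtain ⟨i, -, hi⟩ := Finset.exists_max_image univ (fun i => |y i| / z i) ⟨j0, mem_univ _⟩
  refine ⟨|y i| / z i, i, ?_, ?_, ?_⟩
  · have h1 : 0 < |y j0| / z j0 := div_pos (abs_pos.2 hj0) (hz j0)
    exact lt_of_lt_of_le h1 (hi j0 (mem_univ _))
  · rw [div_mul_cancel₀ _ (hz i).ne']
  · intro j
    rw [← div_le_iff₀ (hz j)]
    exact hi j (mem_univ _)

lemma comparison {V : Type*} [Fintype V] (G : SimpleGraph V) (hG : G.Connected) {μ ρ : ℝ}
    {y z : V → ℝ} (hy : y ≠ 0) (hyE : IsEig G μ y) (hz : ∀ i, 0 < z i) (hρ : ρ ≤ μ)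
    (hsub : ∀ i, ∑ j ∈ univ.filter (fun j => G.Adj i j), z j ≤ ρ * z i) : IsEig G ρ z := by
  obtain ⟨c, i0, hc, hi0, hmax⟩ := exists_max_ratio hy z hz
  have key : ∀ i, |y i| = c * z i →
      (∀ j, G.Adj i j → |y j| = c * z j) ∧
        ∑ j ∈ univ.filter (fun j => G.Adj i j), z j = ρ * z i := by
    intro i hi
    have h1 : μ * |y i| ≤ ∑ j ∈ univ.filter (fun j => G.Adj i j), |y j| := by
      calc μ * |y i| ≤ |μ| * |y i| := by gcongr; exact le_abs_self μ
        _ = |∑ j ∈ univ.filter (fun j => G.Adj i j), y j| := by rw [hyE i, abs_mul]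
        _ ≤ _ := Finset.abs_sum_le_sum_abs _ _
    have h2 : ∑ j ∈ univ.filter (fun j => G.Adj i j), |y j| ≤
        ∑ j ∈ univ.filter (fun j => G.Adj i j), c * z j := sum_le_sum fun j _ => hmax j
    have h3 : ∑ j ∈ univ.filter (fun j => G.Adj i j), c * z j ≤ c * (ρ * z i) := by
      rw [← mul_sum]
      exact mul_le_mul_of_nonneg_left (hsub i) hc.le
    have h4 : c * (ρ * z i) ≤ μ * |y i| := by
      rw [hi]
      have := mul_le_mul_of_nonneg_right hρ (mul_pos hc (hz i)).le
      linarith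
    have e1 : ∑ j ∈ univ.filter (fun j => G.Adj i j), |y j| =
        ∑ j ∈ univ.filter (fun j => G.Adj i j), c * z j := by linarith
    have e2 : ∑ j ∈ univ.filter (fun j => G.Adj i j), c * z j = c * (ρ * z i) := by linarith
    constructor
    · intro j hj
      exact (Finset.sum_eq_sum_iff_of_le (fun j _ => hmax j)).1 e1 j (by simp [hj])
    · rw [← mul_sum] at e2
      exact mul_left_cancel₀ hc.ne' e2
  have hall : ∀ i, |y i| = c * z i := by
    intro i
    obtain ⟨w⟩ := hG.preconnected i0 i
    clear hG
    induction w with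
    | nil => exact hi0
    | cons h _ ih => exact ih ((key _ hi0).1 _ h)
  exact fun i => (key i (hall i)).2

lemma hong {V : Type*} [Fintype V] (G : SimpleGraph V) (hdeg : ∀ i, 1 ≤ dg G i) {μ : ℝ}
    (hμ : 0 ≤ μ) {y : V → ℝ} (hy : y ≠ 0) (hyE : IsEig G μ y) :
    μ ^ 2 + Fintype.card V - 1 ≤ ∑ x, (dg G x : ℝ) := by
  obtain ⟨c, i, hc, hi, hmax⟩ := exists_max_ratio hy (fun _ => 1) (fun _ => one_pos)
  simp only [mul_one] at hi hmax
  have habs : ∀ l, μ * |y l| ≤ ∑ j ∈ univ.filter (fun j => G.Adj l j), |y j| := by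
    intro l
    calc μ * |y l| = |∑ j ∈ univ.filter (fun j => G.Adj l j), y j| := by
          rw [hyE l, abs_mul, abs_of_nonneg hμ]
      _ ≤ _ := Finset.abs_sum_le_sum_abs _ _
  have hd : ∀ l, μ * |y l| ≤ dg G l * c := by
    intro l
    refine (habs l).trans ?_
    have := Finset.sum_le_card_nsmul (univ.filter (fun j => G.Adj l j)) (fun j => |y j|) c
      (fun j _ => hmax j)
    simpa [dg] using this
  have h1 : μ ^ 2 * c ≤ (∑ j ∈ univ.filter (fun j => G.Adj i j), (dg G j : ℝ)) * c := by
    calc μ ^ 2 * c = μ * (μ * |y i|) := by rw [hi]; ring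
      _ ≤ μ * ∑ j ∈ univ.filter (fun j => G.Adj i j), |y j| := by gcongr; exact habs i
      _ = ∑ j ∈ univ.filter (fun j => G.Adj i j), μ * |y j| := by rw [mul_sum]
      _ ≤ ∑ j ∈ univ.filter (fun j => G.Adj i j), (dg G j : ℝ) * c := sum_le_sum fun j _ => hd j
      _ = _ := by rw [sum_mul]
  have h2 : μ ^ 2 ≤ ∑ j ∈ univ.filter (fun j => G.Adj i j), (dg G j : ℝ) :=
    le_of_mul_le_mul_right h1 hc
  have h3 := Finset.sum_filter_add_sum_filter_not univ (fun j => G.Adj i j) (fun j => (dg G j : ℝ))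
  have h4 : ∑ j ∈ univ.filter (fun j => ¬ G.Adj i j), (dg G j : ℝ) ≥ Fintype.card V - 1 := by
    have hmem : i ∈ univ.filter (fun j => ¬ G.Adj i j) := by simp
    rw [← Finset.add_sum_erase _ _ hmem]
    have h5 := Finset.card_nsmul_le_sum ((univ.filter (fun j => ¬ G.Adj i j)).erase i)
      (fun j => (dg G j : ℝ)) 1 (fun j _ => by exact_mod_cast hdeg j)
    have h6 := Finset.card_erase_add_one hmem
    have h7 := card_nonnbr G i
    have h8 : ((((univ.filter (fun j => ¬ G.Adj i j)).erase i).card : ℝ) + 1 + dg G i)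
      = Fintype.card V := by rw [← h7, ← h6]; push_cast; ring
    simp only [nsmul_eq_mul, mul_one] at h5
    linarith
  linarith

/-- The adjacency relation of the extremal graph with centre `a` and pendant set `S`. -/
def IsExt {V : Type*} (H : SimpleGraph V) (S : Finset V) (a : V) : Prop :=
  ∀ i j, H.Adj i j ↔ i ≠ j ∧ (i = a ∨ j = a ∨ (i ∉ S ∧ j ∉ S))

/-- The Perron vector of the extremal graph. -/
noncomputable def perron {V : Type*} (S : Finset V) (a : V) (ρ w : ℝ) (x : V) : ℝ :=
  if x ∈ S then 1 else if x = a then ρ else w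

lemma perron_pos {V : Type*} (S : Finset V) (a : V) {ρ w : ℝ} (h1 : 0 < ρ) (h2 : 0 < w) (x : V) :
    0 < perron S a ρ w x := by
  unfold perron
  split_ifs <;> simp [*]

lemma perron_eig {V : Type*} [Fintype V] (H : SimpleGraph V) (S : Finset V) (a : V) (haS : a ∉ S)
    (hH : IsExt H S a) {ρ w N : ℝ} (hN : (Fintype.card V : ℝ) = N + S.card)
    (e1 : S.card + (N - 1) * w = ρ ^ 2) (e2 : ρ + (N - 2) * w = ρ * w) :
    IsEig H ρ (perron S a ρ w) := by
  have hz1 : ∀ x ∈ S, perron S a ρ w x = 1 := fun x hx => by simp [perron, hx]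
  have hza : perron S a ρ w a = ρ := by simp [perron, haS]
  have hzo : ∀ x, x ∉ S → x ≠ a → perron S a ρ w x = w := fun x hx h => by simp [perron, hx, h]
  have hcard : (((univ \ S).erase a).card : ℝ) = N - 1 := by
    have h1 := Finset.card_erase_add_one (s := univ \ S) (a := a) (by simp [haS])
    have h2 := Finset.card_sdiff_add_card_eq_card (subset_univ S)
    rw [card_univ] at h2
    have : (((univ \ S).erase a).card : ℝ) + 1 + S.card = Fintype.card V := by
      rw [← h2, ← h1]; push_cast; ring
    linarith
  have hsS : ∑ x ∈ S, perron S a ρ w x = S.card := by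
    rw [sum_congr rfl hz1]; simp
  have hsC : ∑ x ∈ (univ \ S).erase a, perron S a ρ w x = (N - 1) * w := by
    rw [sum_congr rfl (fun x hx => hzo x (by simp at hx; exact hx.2) (by simp at hx; exact hx.1)),
      sum_const, nsmul_eq_mul, hcard]
  have hsU : ∑ x ∈ univ \ S, perron S a ρ w x = ρ + (N - 1) * w := by
    rw [← Finset.add_sum_erase (univ \ S) _ (by simp [haS] : a ∈ univ \ S), hza, hsC]
  intro i
  by_cases hiS : i ∈ S
  · have : univ.filter (fun j => H.Adj i j) = {a} := by
      ext j
      simp only [mem_filter, mem_univ, true_and, mem_singleton, hH i j]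
      constructor
      · rintro ⟨_, h | h | h⟩
        · subst h; exact absurd hiS haS
        · exact h
        · exact absurd hiS h.1
      · rintro rfl
        exact ⟨fun h => haS (h ▸ hiS), Or.inr (Or.inl rfl)⟩
    rw [this, sum_singleton, hza, hz1 i hiS, mul_one]
  by_cases hia : i = a
  · subst hia
    have : univ.filter (fun j => H.Adj i j) = S ∪ (univ \ S).erase i := by
      ext j
      simp only [mem_filter, mem_univ, true_and, mem_union, mem_erase, mem_sdiff, hH i j]
      constructor
      · rintro ⟨h, _⟩
        by_cases hj : j ∈ S
        · exact Or.inl hj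
        · exact Or.inr ⟨h.symm, hj⟩
      · rintro (h | h)
        · exact ⟨fun h' => haS (h' ▸ h), Or.inl trivial⟩
        · exact ⟨h.1.symm, Or.inl trivial⟩
    rw [this, sum_union, hsS, hsC, hza, e1, sq]
    apply Finset.disjoint_of_subset_right (erase_subset _ _) disjoint_sdiff
  · have : univ.filter (fun j => H.Adj i j) = (univ \ S).erase i := by
      ext j
      simp only [mem_filter, mem_univ, true_and, mem_erase, mem_sdiff, hH i j]
      constructor
      · rintro ⟨h, h' | h' | h'⟩
        · exact absurd h' hia
        · exact ⟨h.symm, h' ▸ haS⟩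
        · exact ⟨h.symm, h'.2⟩
      · rintro ⟨h, h'⟩
        exact ⟨fun e => h e.symm, Or.inr (Or.inr ⟨hiS, h'⟩)⟩
    have h2 := Finset.add_sum_erase (univ \ S) (perron S a ρ w) (by simp [hiS] : i ∈ univ \ S)
    rw [this, hzo i hiS hia]
    rw [hsU, hzo i hiS hia] at h2
    linarith

lemma exists_root {k N : ℝ} (hk : 2 ≤ k) (hN : 2 ≤ N) :
    ∃ ρ w : ℝ, N - 1 < ρ ∧ 0 < w ∧ k + (N - 1) * w = ρ ^ 2 ∧ ρ + (N - 2) * w = ρ * w := by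
  let g : ℝ → ℝ := fun x => (x ^ 2 - k) * (x - N + 2) - (N - 1) * x
  have hg : ContinuousOn g (Set.Icc (N - 1) (N + k)) := by
    apply Continuous.continuousOn
    fun_prop
  have h1 : g (N - 1) = -k := by simp only [g]; ring
  have h2 : 0 ≤ g (N + k) := by
    simp only [g]
    have : 0 ≤ ((N + k) ^ 2 - k) - (N - 1) * (N + k) := by nlinarith
    have h3 : 0 ≤ (N + k) ^ 2 - k := by nlinarith
    nlinarith [mul_nonneg h3 (by linarith : (0 : ℝ) ≤ k + 1)]
  have := intermediate_value_Icc (by linarith : N - 1 ≤ N + k) hg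
  obtain ⟨ρ, ⟨hρ1, hρ2⟩, hρ⟩ := this (⟨by rw [h1]; linarith, h2⟩ : (0 : ℝ) ∈ Set.Icc _ _)
  have hlt : N - 1 < ρ := by
    rcases hρ1.lt_or_eq with h | h
    · exact h
    · rw [← h, h1] at hρ
      linarith
  have hd : 0 < ρ - N + 2 := by linarith
  refine ⟨ρ, ρ / (ρ - N + 2), hlt, div_pos (by linarith) hd, ?_, ?_⟩
  · simp only [g] at hρ
    field_simp
    linarith
  · field_simp
    ring

lemma caseB {V : Type*} [Fintype V] (G : SimpleGraph V) (hG : G.Connected) {k : ℕ}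
    (D : Finset V) (hD : D.card + k = Fintype.card V) (hD2 : 2 ≤ D.card)
    (hham : ∀ a ∈ D, ∀ b ∈ D, a ≠ b →
      ∃ p : ℕ → V, (∀ i < D.card, ∀ j < D.card, p i = p j → i = j) ∧ p 0 = a ∧
        p (D.card - 1) = b ∧ (∀ i < D.card, p i ∈ D) ∧
        ∀ m, m + 1 < D.card → G.Adj (p m) (p (m + 1)))
    {x y a : V} (hx : x ∉ D) (hy : y ∉ D) (ha : a ∈ D) (hyx : G.Adj y x) (hxa : G.Adj x a) :
    HasSpanningKEndedTree G k := by
  obtain ⟨b, hb, hba⟩ := Finset.exists_mem_ne (by omega : 1 < D.card) a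
  obtain ⟨p, hinj, h0, h1, hmem, hadj⟩ := hham a ha b hb hba.symm
  have hyx' := hyx.ne
  apply tree_of_path G hG (fun i => if i = 0 then y else if i = 1 then x else p (i - 2))
    (D.card + 1) k ?_ ?_ (by omega) (by omega)
  · have hpx : ∀ i, i < D.card → p i ≠ x := fun i hi h => hx (h ▸ hmem i hi)
    have hpy : ∀ i, i < D.card → p i ≠ y := fun i hi h => hy (h ▸ hmem i hi)
    intro i hi j hj h
    split_ifs at h with c1 c2 c3 c4 c5 c6 c7
    · omega
    · exact absurd h hyx'
    · exact absurd h.symm (hpy _ (by omega))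
    · exact absurd h.symm hyx'
    · omega
    · exact absurd h.symm (hpx _ (by omega))
    · exact absurd h (hpy _ (by omega))
    · exact absurd h (hpx _ (by omega))
    · have := hinj _ (by omega) _ (by omega) h
      omega
  · intro i hi
    rcases i with _ | _ | i
    · simpa using hyx
    · simpa [h0] using hxa
    · have := hadj i (by omega)
      simpa using this

lemma caseA {V : Type*} [Fintype V] (G : SimpleGraph V) (hG : G.Connected) {k : ℕ}
    (D : Finset V) (hD : D.card + k = Fintype.card V) (hD2 : 2 ≤ D.card)
    (hham : ∀ a ∈ D, ∀ b ∈ D, a ≠ b →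
      ∃ p : ℕ → V, (∀ i < D.card, ∀ j < D.card, p i = p j → i = j) ∧ p 0 = a ∧
        p (D.card - 1) = b ∧ (∀ i < D.card, p i ∈ D) ∧
        ∀ m, m + 1 < D.card → G.Adj (p m) (p (m + 1)))
    {x y a b : V} (hx : x ∉ D) (hy : y ∉ D) (hxy : x ≠ y) (ha : a ∈ D) (hb : b ∈ D) (hab : a ≠ b)
    (hxa : G.Adj x a) (hyb : G.Adj y b) : HasSpanningKEndedTree G k := by
  obtain ⟨p, hinj, h0, h1, hmem, hadj⟩ := hham a ha b hb hab
  apply tree_of_path G hG (fun i => if i = 0 then x else if i = D.card + 1 then y else p (i - 1))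
    (D.card + 1) k ?_ ?_ (by omega) (by omega)
  · have hpx : ∀ i, i < D.card → p i ≠ x := fun i hi h => hx (h ▸ hmem i hi)
    have hpy : ∀ i, i < D.card → p i ≠ y := fun i hi h => hy (h ▸ hmem i hi)
    intro i hi j hj h
    split_ifs at h with c1 c2 c3 c4 c5 c6 c7
    · omega
    · exact absurd h hxy
    · exact absurd h.symm (hpx _ (by omega))
    · exact absurd h.symm hxy
    · omega
    · exact absurd h.symm (hpy _ (by omega))
    · exact absurd h (hpx _ (by omega))
    · exact absurd h (hpy _ (by omega))
    · have := hinj _ (by omega) _ (by omega) h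
      omega
  · intro i hi
    rcases i with _ | i
    · rw [if_pos rfl, if_neg (by omega), if_neg (by omega)]
      simpa [h0] using hxa
    · rw [if_neg (by omega), if_neg (by omega), if_neg (by omega)]
      by_cases hi' : i + 1 = D.card
      · rw [if_pos (by omega), show i + 1 - 1 = D.card - 1 by omega, h1]
        exact hyb.symm
      · rw [if_neg (by omega)]
        exact hadj i (by omega)

lemma pendant_or_tree {V : Type*} [Fintype V] (G : SimpleGraph V) (hG : G.Connected) {k : ℕ}
    (hk : 2 ≤ k) (D : Finset V) (hD : D.card + k = Fintype.card V) (hD2 : 2 ≤ D.card)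
    (hham : ∀ a ∈ D, ∀ b ∈ D, a ≠ b →
      ∃ p : ℕ → V, (∀ i < D.card, ∀ j < D.card, p i = p j → i = j) ∧ p 0 = a ∧
        p (D.card - 1) = b ∧ (∀ i < D.card, p i ∈ D) ∧
        ∀ m, m + 1 < D.card → G.Adj (p m) (p (m + 1))) :
    HasSpanningKEndedTree G k ∨ ∃ a ∈ D, ∀ x, x ∉ D → ∀ z, G.Adj x z → z = a := by
  by_cases hT : HasSpanningKEndedTree G k
  · exact Or.inl hT
  right
  have hB : ∀ x y a, x ∉ D → y ∉ D → a ∈ D → G.Adj y x → G.Adj x a → False :=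
    fun x y a hx hy ha h1 h2 => hT (caseB G hG D hD hD2 hham hx hy ha h1 h2)
  have hA : ∀ x y a b, x ∉ D → y ∉ D → x ≠ y → a ∈ D → b ∈ D → G.Adj x a → G.Adj y b → a = b :=
    fun x y a b hx hy hxy ha hb h1 h2 => by
      by_contra hab
      exact hT (caseA G hG D hD hD2 hham hx hy hxy ha hb hab h1 h2)
  obtain ⟨d, hd⟩ : D.Nonempty := by rw [← card_pos]; omega
  -- no edges outside `D`
  have hatt : ∀ x, x ∉ D → ∃ a ∈ D, G.Adj x a := by
    intro x hx
    by_contra hno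
    push Not at hno
    obtain ⟨w⟩ := hG.preconnected x d
    obtain ⟨e, -, he1, he2⟩ := w.exists_boundary_dart {v | v ∉ D ∧ ∀ a ∈ D, ¬ G.Adj v a}
      ⟨hx, hno⟩ (fun h => h.1 hd)
    obtain ⟨h1, h2⟩ := he1
    have h3 : e.snd ∉ D := fun h => h2 _ h e.adj
    have h4 : ∃ a ∈ D, G.Adj e.snd a := by
      by_contra hcon
      push Not at hcon
      exact he2 ⟨h3, hcon⟩
    obtain ⟨a, ha, h5⟩ := h4
    exact hB _ _ a h3 h1 ha e.adj h5
  have hout : ∀ x z, x ∉ D → G.Adj x z → z ∈ D := by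
    intro x z hx hxz
    by_contra hz
    obtain ⟨a, ha, h⟩ := hatt x hx
    exact hB x z a hx hz ha hxz.symm h
  have hSc : 1 < (univ \ D).card := by
    rw [card_sdiff_of_subset (subset_univ _), card_univ]; omega
  obtain ⟨x0, hx0, y0, hy0, hxy0⟩ := Finset.one_lt_card.1 hSc
  simp only [mem_sdiff, mem_univ, true_and] at hx0 hy0
  obtain ⟨a, ha, hxa⟩ := hatt x0 hx0
  obtain ⟨b, hb, hyb⟩ := hatt y0 hy0
  have hab := hA x0 y0 a b hx0 hy0 hxy0 ha hb hxa hyb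
  subst hab
  refine ⟨a, ha, ?_⟩
  intro x hx z hxz
  have hz := hout x z hx hxz
  by_cases hxx : x = x0
  · subst hxx
    exact hA x y0 z a hx hy0 hxy0 hz ha hxz hyb
  · exact hA x x0 z a hx hx0 hxx hz ha hxz hxa

lemma ext_of_eig {V : Type*} [Fintype V] (G : SimpleGraph V) (S : Finset V) (a : V) (haS : a ∉ S)
    (hsub : ∀ x, x ∈ S → ∀ z, G.Adj x z → z = a) (hG : G.Connected) {ρ w N μ : ℝ}
    (hρ : 0 < ρ) (hw : 0 < w) (hN : (Fintype.card V : ℝ) = N + S.card)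
    (e1 : S.card + (N - 1) * w = ρ ^ 2) (e2 : ρ + (N - 2) * w = ρ * w) {y : V → ℝ} (hy : y ≠ 0)
    (hyE : IsEig G μ y) (hμ : ρ ≤ μ) : IsExt G S a := by
  obtain ⟨H, hH⟩ : ∃ H : SimpleGraph V, IsExt H S a :=
    ⟨{ Adj := fun i j => i ≠ j ∧ (i = a ∨ j = a ∨ (i ∉ S ∧ j ∉ S))
       symm := ⟨fun i j h => ⟨h.1.symm, by tauto⟩⟩
       loopless := ⟨fun i h => h.1 rfl⟩ }, fun i j => Iff.rfl⟩
  have hGH : ∀ i j, G.Adj i j → H.Adj i j := by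
    intro i j h
    refine (hH i j).2 ⟨h.ne, ?_⟩
    by_cases hi : i ∈ S
    · exact Or.inr (Or.inl (hsub i hi j h))
    by_cases hj : j ∈ S
    · exact Or.inl (hsub j hj i h.symm)
    · exact Or.inr (Or.inr ⟨hi, hj⟩)
  have hE := perron_eig H S a haS hH hN e1 e2
  have hpos := perron_pos S a hρ hw
  have hss : ∀ i, univ.filter (fun j => G.Adj i j) ⊆ univ.filter (fun j => H.Adj i j) := by
    intro i j
    simp only [mem_filter, mem_univ, true_and]
    exact hGH i j
  have hE' : IsEig G ρ (perron S a ρ w) := by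
    apply comparison G hG hy hyE hpos hμ
    intro i
    rw [← hE i]
    exact sum_le_sum_of_subset_of_nonneg (hss i) (fun j _ _ => (hpos j).le)
  intro i j
  refine ⟨fun h => (hH i j).1 (hGH i j h), fun h => ?_⟩
  by_contra hn
  have hlt : ∑ j ∈ univ.filter (fun j => G.Adj i j), perron S a ρ w j <
      ∑ j ∈ univ.filter (fun j => H.Adj i j), perron S a ρ w j := by
    apply sum_lt_sum_of_subset (hss i) (i := j) _ _ (hpos j) (fun j _ _ => (hpos j).le)
    · simp only [mem_filter, mem_univ, true_and]
      exact (hH i j).2 h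
    · simpa using hn
  rw [hE i, hE' i] at hlt
  exact lt_irrefl _ hlt

lemma iso_of_ext {V : Type*} [Fintype V] {G H : SimpleGraph V} {S S' : Finset V} {a a' : V}
    (ha : a ∉ S) (ha' : a' ∉ S') (hG : IsExt G S a) (hH : IsExt H S' a') (hc : S.card = S'.card) :
    Nonempty (G ≃g H) := by
  let e0 : {x // x ∈ S} ≃ {x // x ∈ S'} := Finset.equivOfCardEq hc
  let e1 : V ≃ V := e0.extendSubtype
  have h1 : ∀ x, e1 x ∈ S' ↔ x ∈ S := by
    intro x
    by_cases hx : x ∈ S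
    · exact ⟨fun _ => hx, fun _ => e0.extendSubtype_mem x hx⟩
    · exact ⟨fun h => absurd h (e0.extendSubtype_not_mem x hx), fun h => absurd h hx⟩
  let e2 : V ≃ V := e1.trans (Equiv.swap (e1 a) a')
  have h2a : e2 a = a' := by simp [e2]
  have h2 : ∀ x, e2 x ∈ S' ↔ x ∈ S := by
    intro x
    rw [← h1 x]
    have hea : e1 a ∉ S' := fun h => ha ((h1 a).1 h)
    simp only [e2, Equiv.trans_apply]
    rcases eq_or_ne (e1 x) (e1 a) with h | h
    · rw [h, Equiv.swap_apply_left]; tauto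
    rcases eq_or_ne (e1 x) a' with h' | h'
    · rw [h', Equiv.swap_apply_right]; tauto
    · rw [Equiv.swap_apply_of_ne_of_ne h h']
  have h3 : ∀ x, e2 x = a' ↔ x = a := by
    intro x
    rw [← h2a, e2.injective.eq_iff]
  refine ⟨⟨e2, ?_⟩⟩
  intro x y
  rw [hG x y, hH (e2 x) (e2 y), h3, h3, h2, h2, ne_eq, e2.injective.eq_iff]

lemma oneJoin_ext {n k : ℕ} (hkn : k < n) :
    ∃ (S : Finset (Fin n)) (a : Fin n), a ∉ S ∧ S.card = k ∧
      IsExt (oneJoinCliquePlusIso n k) S a := by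
  rcases Nat.eq_zero_or_pos k with hk | hk
  · refine ⟨∅, ⟨0, by omega⟩, by simp, by simp [hk], ?_⟩
    intro i j
    simp only [oneJoinCliquePlusIso, SimpleGraph.fromRel_adj]
    have := i.2
    have := j.2
    simp [hk]
  refine ⟨Finset.Ici ⟨n - k, by omega⟩, ⟨0, by omega⟩, ?_, ?_, ?_⟩
  · simp only [mem_Ici, Fin.le_def]
    omega
  · rw [Fin.card_Ici]
    simp only
    omega
  · intro i j
    simp only [oneJoinCliquePlusIso, SimpleGraph.fromRel_adj, mem_Ici, Fin.le_def, Fin.ext_iff,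
      not_le, ne_eq]
    tauto

end KEnd

/-- **Theorem (spectral radius and spanning `k`-ended trees).**
Let `k ≥ 2` and let `G` be a connected graph of order
`n ≥ max {6k+5, k² + (3/2)k + 2}`.  If `ρ(G) ≥ ρ(K₁ ∨ (K_{n-k-1} + kK₁))`,
then `G` has a spanning `k`-ended-tree unless `G ≅ K₁ ∨ (K_{n-k-1} + kK₁)`. -/
theorem spectral_spanning_k_ended_tree {n k : ℕ} (hk : 2 ≤ k)
    (hn1 : 6 * k + 5 ≤ n) (hn2 : (k : ℝ) ^ 2 + 3 / 2 * k + 2 ≤ (n : ℝ))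
    (G : SimpleGraph (Fin n)) (hG : G.Connected)
    (hρ : specRad (oneJoinCliquePlusIso n k) ≤ specRad G) :
    HasSpanningKEndedTree G k ∨ Nonempty (G ≃g oneJoinCliquePlusIso n k) := by
  obtain ⟨S₀, a₀, ha₀, hS₀, hH⟩ := KEnd.oneJoin_ext (n := n) (k := k) (by omega)
  have hn1' : (6 * k + 5 : ℝ) ≤ n := by exact_mod_cast hn1
  have hk' : (2 : ℝ) ≤ k := by exact_mod_cast hk
  obtain ⟨ρ, w, hρN, hw, e1, e2⟩ := KEnd.exists_root (k := k) (N := (n : ℝ) - k) hk' (by linarith)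
  have hρ0 : 0 < ρ := by linarith
  have hEig := KEnd.perron_eig (oneJoinCliquePlusIso n k) S₀ a₀ ha₀ hH (ρ := ρ) (w := w)
    (N := (n : ℝ) - k) (by rw [hS₀, Fintype.card_fin]; ring) (by rw [hS₀]; exact e1) e2
  have hne : KEnd.perron S₀ a₀ ρ w ≠ 0 := by
    intro h
    have h1 := KEnd.perron_pos S₀ a₀ hρ0 hw a₀
    rw [h] at h1
    exact lt_irrefl _ h1
  have hμ : ρ ≤ specRad G := (KEnd.specRad_ge _ hne hEig).trans hρ
  obtain ⟨y, hy, hyE⟩ := KEnd.specRad_eig G (lt_of_lt_of_le hρ0 hμ)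
  have hdeg : ∀ i, 1 ≤ KEnd.dg G i := by
    intro i
    have : Nontrivial (Fin n) := Fin.nontrivial_iff_two_le.2 (by omega)
    obtain ⟨j, hj⟩ := hG.preconnected.exists_adj_of_nontrivial i
    exact Finset.card_pos.2 ⟨j, by simp [hj]⟩
  have hhong := KEnd.hong G hdeg (hρ0.le.trans hμ) hy hyE
  rw [Fintype.card_fin] at hhong
  have hsum : ((Fintype.card (Fin n) : ℤ) - k - 1) ^ 2 + Fintype.card (Fin n) - 1 ≤
      ∑ x, (KEnd.dg G x : ℤ) := by
    rw [Fintype.card_fin]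
    have h1 : ((n : ℝ) - k - 1) ^ 2 ≤ specRad G ^ 2 :=
      pow_le_pow_left₀ (by linarith) (by linarith) 2
    have h2 : ((n : ℝ) - k - 1) ^ 2 + n - 1 ≤ ∑ x, (KEnd.dg G x : ℝ) := by linarith
    exact_mod_cast h2
  obtain ⟨D, hDc, hham⟩ := KEnd.core_ham G hk (by rw [Fintype.card_fin]; exact hn1)
    (by
      rw [Fintype.card_fin]
      have : (2 * k ^ 2 + 3 * k + 4 : ℝ) ≤ 2 * n := by linarith
      exact_mod_cast this) hsum
  rw [Fintype.card_fin] at hDc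
  rcases KEnd.pendant_or_tree G hG hk D (by rw [Fintype.card_fin]; exact hDc) (by omega) hham
    with hT | ⟨a, ha, hst⟩
  · exact Or.inl hT
  right
  have hSc : (univ \ D).card = k := by
    rw [card_sdiff_of_subset (subset_univ _), card_univ, Fintype.card_fin]; omega
  have hGext := KEnd.ext_of_eig G (univ \ D) a (by simp [ha])
    (fun x hx => hst x (by simpa using hx)) hG hρ0 hw (N := (n : ℝ) - k)
    (by rw [hSc, Fintype.card_fin]; ring) (by rw [hSc]; exact e1) e2 hy hyE hμ
  exact KEnd.iso_of_ext (by simp [ha]) ha₀ hGext hH (by rw [hSc, hS₀])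
end

section
/- Let k ≥ 2 be an integer and let G be a connected graph of order n with n ≥ max{6k+5, (3/2)k² + (3/2)k + 2}. If the signless Laplacian spectral radius satisfies q(G) ≥ q(K₁ ∨ (K_{n−k−1} + kK₁)), then G has a spanning k-ended-tree, unless G is isomorphic to K₁ ∨ (K_{n−k−1} + kK₁). -/
open Finset
open scoped Classical

theorem qMat_symm {V : Type*} [Fintype V] (G : SimpleGraph V) (i j : V) :
    qMat G i j = qMat G j i := by
  unfold qMat
  by_cases h : i = j
  · subst h; rfl
  · have h' : ¬ j = i := fun e => h e.symm
    simp [h, h', G.adj_comm]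

theorem qMat_isHermitian {V : Type*} [Fintype V] (G : SimpleGraph V) :
    (qMat G).IsHermitian := by
  ext i j
  simp [Matrix.conjTranspose_apply, qMat_symm G i j]

/-- entrywise action of `Q` -/
theorem qMat_mulVec {V : Type*} [Fintype V] (G : SimpleGraph V) (x : V → ℝ) (i : V) :
    (Matrix.mulVec (qMat G) x) i = ∑ j, (if G.Adj i j then x i + x j else 0) := by
  have h2 : ((univ.filter fun u => G.Adj i u).card : ℝ) * x i
      = ∑ j, (if G.Adj i j then x i else 0) := by
    rw [← Finset.sum_filter, Finset.sum_const, nsmul_eq_mul]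
  simp only [Matrix.mulVec, dotProduct, qMat, add_mul, Finset.sum_add_distrib]
  simp only [ite_mul, zero_mul, one_mul, Finset.sum_ite_eq, Finset.mem_univ, if_true]
  rw [h2, ← Finset.sum_add_distrib]
  refine Finset.sum_congr rfl fun j _ => ?_
  split_ifs <;> simp

/-- quadratic form -/
noncomputable def qForm {V : Type*} [Fintype V] (G : SimpleGraph V) (x : V → ℝ) : ℝ :=
  ∑ i, ∑ j, (if G.Adj i j then (x i + x j) ^ 2 else 0)

theorem dot_qMat {V : Type*} [Fintype V] (G : SimpleGraph V) (x : V → ℝ) :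
    2 * (x ⬝ᵥ (Matrix.mulVec (qMat G) x)) = qForm G x := by
  have e1 : x ⬝ᵥ (Matrix.mulVec (qMat G) x)
      = ∑ i, ∑ j, (if G.Adj i j then x i * (x i + x j) else 0) := by
    simp only [dotProduct, qMat_mulVec, Finset.mul_sum, mul_ite, mul_zero]
  have e2 : x ⬝ᵥ (Matrix.mulVec (qMat G) x)
      = ∑ i, ∑ j, (if G.Adj i j then x j * (x i + x j) else 0) := by
    rw [e1, Finset.sum_comm]
    refine Finset.sum_congr rfl fun i _ => Finset.sum_congr rfl fun j _ => ?_
    simp only [G.adj_comm j i, add_comm (x j) (x i)]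
  rw [two_mul]
  nth_rewrite 1 [e1]
  rw [e2, ← Finset.sum_add_distrib]
  unfold qForm
  refine Finset.sum_congr rfl fun i _ => ?_
  rw [← Finset.sum_add_distrib]
  refine Finset.sum_congr rfl fun j _ => ?_
  split_ifs <;> ring

theorem exists_top_eigenvalue {V : Type*} [Fintype V] [Nonempty V] (A : Matrix V V ℝ)
    (hA : A.IsHermitian) :
    ∃ μ : ℝ, Module.End.HasEigenvalue (Matrix.mulVecLin A) μ ∧
      ∀ x : V → ℝ, x ⬝ᵥ (Matrix.mulVec A x) ≤ μ * (x ⬝ᵥ x) := by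
  obtain ⟨i0, hi0⟩ := Finite.exists_max hA.eigenvalues
  refine ⟨hA.eigenvalues i0, ?_, ?_⟩
  · have h := hA.mulVec_eigenvectorBasis i0
    refine Module.End.hasEigenvalue_of_hasEigenvector
      (x := (hA.eigenvectorBasis i0 : EuclideanSpace ℝ V).ofLp) ⟨?_, ?_⟩
    · rw [Module.End.mem_eigenspace_iff]
      simpa using h
    · intro h0
      have := hA.eigenvectorBasis.orthonormal.ne_zero i0
      exact this (by ext i; exact congrFun h0 i)
  · have hB : (hA.eigenvalues i0 • (1 : Matrix V V ℝ) - A).PosSemidef := by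
      have hBH : (hA.eigenvalues i0 • (1 : Matrix V V ℝ) - A).IsHermitian := by
        refine Matrix.IsHermitian.sub ?_ hA
        ext i j
        simp [Matrix.conjTranspose_apply, Matrix.one_apply, eq_comm]
      rw [hBH.posSemidef_iff_eigenvalues_nonneg]
      intro i
      have h := hBH.mulVec_eigenvectorBasis i
      set w := (hBH.eigenvectorBasis i : EuclideanSpace ℝ V).ofLp with hw
      have hw0 : w ≠ 0 := by
        intro h0
        have := hBH.eigenvectorBasis.orthonormal.ne_zero i
        exact this (by ext i; exact congrFun h0 i)
      have h3 : Matrix.mulVec A w = (hA.eigenvalues i0 - hBH.eigenvalues i) • w := by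
        rw [Matrix.sub_mulVec, Matrix.smul_mulVec, Matrix.one_mulVec] at h
        rw [sub_smul, ← h]; abel
      have h4 : (hA.eigenvalues i0 - hBH.eigenvalues i) ∈ spectrum ℝ A := by
        rw [← Matrix.spectrum_toLin']
        apply Module.End.HasEigenvalue.mem_spectrum
        refine Module.End.hasEigenvalue_of_hasEigenvector (x := w) ⟨?_, hw0⟩
        rw [Module.End.mem_eigenspace_iff]
        simpa using h3
      rw [hA.spectrum_real_eq_range_eigenvalues] at h4
      obtain ⟨j, hj⟩ := h4
      have := hi0 j
      simp only [Pi.zero_apply]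
      linarith
    intro x
    have := hB.dotProduct_mulVec_nonneg x
    rw [Matrix.sub_mulVec, Matrix.smul_mulVec, Matrix.one_mulVec] at this
    simp only [star_trivial, dotProduct_sub, dotProduct_smul, smul_eq_mul] at this
    linarith

theorem qRad_spec {V : Type*} [Fintype V] [Nonempty V] (G : SimpleGraph V) :
    (∃ x : V → ℝ, x ≠ 0 ∧ Matrix.mulVec (qMat G) x = qRad G • x) ∧
      ∀ x : V → ℝ, qForm G x ≤ 2 * qRad G * (x ⬝ᵥ x) := by
  obtain ⟨μ, hμ, hR⟩ := exists_top_eigenvalue (qMat G) (qMat_isHermitian G)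
  have hg : IsGreatest {μ : ℝ | Module.End.HasEigenvalue (Matrix.mulVecLin (qMat G)) μ} μ := by
    refine ⟨hμ, ?_⟩
    intro ν hν
    obtain ⟨x, hx⟩ := Module.End.HasEigenvalue.exists_hasEigenvector hν
    have h1 := hx.apply_eq_smul
    have h2 := hR x
    rw [Matrix.mulVecLin_apply] at h1
    rw [h1, dotProduct_smul, smul_eq_mul] at h2
    have h3 : 0 < x ⬝ᵥ x := by
      have := Matrix.dotProduct_self_star_pos_iff (v := x) |>.2 hx.2
      simpa using this
    exact le_of_mul_le_mul_right h2 h3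
  have e : qRad G = μ := hg.csSup_eq
  rw [e]
  constructor
  · obtain ⟨x, hx⟩ := Module.End.HasEigenvalue.exists_hasEigenvector hμ
    exact ⟨x, hx.2, by simpa using hx.apply_eq_smul⟩
  · intro x
    rw [← dot_qMat]
    linarith [hR x]

theorem eig_of_opt {V : Type*} [Fintype V] [Nonempty V] (G : SimpleGraph V) (x : V → ℝ)
    (h : 2 * qRad G * (x ⬝ᵥ x) ≤ qForm G x) : Matrix.mulVec (qMat G) x = qRad G • x := by
  have hB : (qRad G • (1 : Matrix V V ℝ) - qMat G).PosSemidef := by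
    refine Matrix.PosSemidef.of_dotProduct_mulVec_nonneg ?_ ?_
    · refine Matrix.IsHermitian.sub ?_ (qMat_isHermitian G)
      ext i j
      simp [Matrix.conjTranspose_apply, Matrix.one_apply, eq_comm]
    · intro y
      rw [Matrix.sub_mulVec, Matrix.smul_mulVec, Matrix.one_mulVec]
      simp only [star_trivial, dotProduct_sub, dotProduct_smul, smul_eq_mul]
      have := (qRad_spec G).2 y
      rw [← dot_qMat] at this
      linarith
  have h1 := (qRad_spec G).2 x
  have h2 := (hB.dotProduct_mulVec_zero_iff x).1 (by
    rw [Matrix.sub_mulVec, Matrix.smul_mulVec, Matrix.one_mulVec]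
    simp only [star_trivial, dotProduct_sub, dotProduct_smul, smul_eq_mul]
    rw [← dot_qMat] at h h1
    linarith)
  rw [Matrix.sub_mulVec, Matrix.smul_mulVec, Matrix.one_mulVec] at h2
  exact (sub_eq_zero.1 h2).symm

theorem qRad_lt {V : Type*} [Fintype V] [Nonempty V] (G G' : SimpleGraph V) (hG : G.Connected)
    (hlt : G < G') : qRad G < qRad G' := by
  obtain ⟨x, hx0, hx⟩ := (qRad_spec G).1
  set y : V → ℝ := fun i => |x i| with hy
  have hyy : y ⬝ᵥ y = x ⬝ᵥ x := by simp [dotProduct, hy]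
  have hxx : 0 < x ⬝ᵥ x := by
    have := Matrix.dotProduct_self_star_pos_iff (v := x) |>.2 hx0
    simpa using this
  have h1 : qForm G x = 2 * qRad G * (x ⬝ᵥ x) := by
    rw [← dot_qMat, hx, dotProduct_smul, smul_eq_mul]; ring
  have h2 : qForm G x ≤ qForm G y := by
    unfold qForm
    refine Finset.sum_le_sum fun i _ => Finset.sum_le_sum fun j _ => ?_
    split_ifs
    · rw [← sq_abs (x i + x j)]
      have := abs_add_le (x i) (x j)
      exact pow_le_pow_left₀ (abs_nonneg _) this 2
    · exact le_rfl
  have h3 := eig_of_opt G y (by rw [hyy]; linarith)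
  have hyn : ∀ i, 0 ≤ y i := fun i => abs_nonneg _
  have hz : ∀ u v, G.Adj u v → y u = 0 → y v = 0 := by
    intro u v huv hu
    have := congrFun h3 u
    rw [qMat_mulVec] at this
    simp only [Pi.smul_apply, hu, smul_zero, zero_add] at this
    have h4 := (Finset.sum_eq_zero_iff_of_nonneg (by
      intro j _; split_ifs
      · exact hyn j
      · exact le_rfl)).1 this v (Finset.mem_univ _)
    simpa [huv] using h4
  have hpos : ∀ i, 0 < y i := by
    intro i
    refine lt_of_le_of_ne (hyn i) fun h0 => hx0 ?_
    have : ∀ j, y j = 0 := by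
      intro j
      obtain ⟨p⟩ := hG.preconnected i j
      by_contra hj
      obtain ⟨d, _, hd1, hd2⟩ := p.exists_boundary_dart {v | y v = 0} h0.symm hj
      exact hd2 (hz _ _ d.adj hd1)
    ext j
    exact abs_eq_zero.1 (this j)
  have h5 : qForm G y < qForm G' y := by
    obtain ⟨u, v, huv, hn⟩ : ∃ u v, G'.Adj u v ∧ ¬ G.Adj u v := by
      by_contra hcon
      push Not at hcon
      exact absurd (fun u v h => hcon u v h : G' ≤ G) hlt.not_ge
    have hle : ∀ i j, (if G.Adj i j then (y i + y j) ^ 2 else 0)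
        ≤ (if G'.Adj i j then (y i + y j) ^ 2 else 0) := by
      intro i j
      by_cases h : G.Adj i j
      · simp [h, hlt.le h]
      · simp only [h, if_false]; split_ifs <;> positivity
    unfold qForm
    refine Finset.sum_lt_sum (fun i _ => Finset.sum_le_sum fun j _ => hle i j) ⟨u, mem_univ _, ?_⟩
    refine Finset.sum_lt_sum (fun j _ => hle u j) ⟨v, mem_univ _, ?_⟩
    simp only [hn, huv, if_true, if_false]
    have := hpos u; have := hpos v; positivity
  have h6 := (qRad_spec G').2 y
  have h7 : 2 * qRad G * (x ⬝ᵥ x) < 2 * qRad G' * (x ⬝ᵥ x) := by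
    rw [hyy] at h6; linarith
  have := lt_of_mul_lt_mul_right h7 hxx.le
  linarith

theorem qRad_le_of_iso {V W : Type*} [Fintype V] [Nonempty V] [Fintype W] [Nonempty W]
    (G : SimpleGraph V) (H : SimpleGraph W) (e : G ≃g H) : qRad G ≤ qRad H := by
  obtain ⟨x, hx0, hx⟩ := (qRad_spec G).1
  have hxx : 0 < x ⬝ᵥ x := by
    have := Matrix.dotProduct_self_star_pos_iff (v := x) |>.2 hx0
    simpa using this
  have h1 : qForm G x = 2 * qRad G * (x ⬝ᵥ x) := by
    rw [← dot_qMat, hx, dotProduct_smul, smul_eq_mul]; ring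
  have h2 : qForm H (fun w => x (e.symm w)) = qForm G x := by
    unfold qForm
    rw [← Equiv.sum_comp e.toEquiv]
    refine Finset.sum_congr rfl fun i _ => ?_
    rw [← Equiv.sum_comp e.toEquiv]
    refine Finset.sum_congr rfl fun j _ => ?_
    have : H.Adj (e i) (e j) ↔ G.Adj i j := e.map_adj_iff
    simp [this]
  have h3 : (fun w => x (e.symm w)) ⬝ᵥ (fun w => x (e.symm w)) = x ⬝ᵥ x := by
    unfold dotProduct
    rw [← Equiv.sum_comp e.toEquiv]
    simp
  have h4 := (qRad_spec H).2 (fun w => x (e.symm w))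
  rw [h2, h3, h1] at h4
  have := le_of_mul_le_mul_right h4 hxx
  linarith

/-- degree, as the cardinality of a filter -/
noncomputable def dg {V : Type*} [Fintype V] (G : SimpleGraph V) (v : V) : ℕ :=
  (univ.filter fun u => G.Adj v u).card

theorem dg_sum {V : Type*} [Fintype V] (G : SimpleGraph V) (v : V) :
    (dg G v : ℝ) = ∑ u, (if G.Adj v u then (1 : ℝ) else 0) := by
  simp [dg]

theorem dg_lt {V : Type*} [Fintype V] (G : SimpleGraph V) (v : V) :
    dg G v + 1 ≤ Fintype.card V := by
  unfold dg
  have : (univ.filter fun u => G.Adj v u) ⊆ univ.erase v := by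
    intro u hu
    simp only [mem_filter, mem_univ, true_and] at hu
    simp [hu.ne']
  have h1 := Finset.card_le_card this
  rw [Finset.card_erase_of_mem (mem_univ _), Finset.card_univ] at h1
  have : 0 < Fintype.card V := Fintype.card_pos_iff.2 ⟨v⟩
  omega

theorem dg_pos {V : Type*} [Fintype V] [Nontrivial V] (G : SimpleGraph V) (hG : G.Connected)
    (v : V) : 1 ≤ dg G v := by
  obtain ⟨w, hw⟩ := hG.preconnected.exists_adj_of_nontrivial v
  exact Finset.card_pos.2 ⟨w, by simpa using hw⟩

theorem qRad_ext_lower {n k : ℕ} (hkn : k + 1 ≤ n) :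
    2 * ((n : ℝ) - k - 1) ≤ qRad (oneJoinCliquePlusIso n k) := by
  have : Nonempty (Fin n) := ⟨⟨0, by omega⟩⟩
  set H := oneJoinCliquePlusIso n k with hH
  set S : Finset (Fin n) := univ.filter fun i => i.val < n - k with hS
  have hSc : S.card = n - k := by
    rw [hS]
    rw [Fin.card_filter_val_lt]
    omega
  set x : Fin n → ℝ := fun i => if i ∈ S then 1 else 0 with hx
  have h1 : x ⬝ᵥ x = (n : ℝ) - k := by
    have : x ⬝ᵥ x = ∑ i, (if i ∈ S then (1 : ℝ) else 0) := by
      simp [dotProduct, hx]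
    rw [this]
    simp only [Finset.sum_ite_mem, Finset.univ_inter, Finset.sum_const, hSc, nsmul_eq_mul, mul_one]
    rw [Nat.cast_sub (by omega)]
  have hadj : ∀ i ∈ S, ∀ j ∈ S, i ≠ j → H.Adj i j := by
    intro i hi j hj hij
    simp only [hS, mem_filter, mem_univ, true_and] at hi hj
    rw [hH, oneJoinCliquePlusIso, SimpleGraph.fromRel_adj]
    exact ⟨hij, Or.inl (Or.inr ⟨hi, hj⟩)⟩
  have h2 : 4 * (((n : ℝ) - k) * ((n : ℝ) - k - 1)) ≤ qForm H x := by
    unfold qForm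
    have h3 : ∀ i ∈ S, 4 * ((n : ℝ) - k - 1) ≤ ∑ j, (if H.Adj i j then (x i + x j) ^ 2 else 0) := by
      intro i hi
      have h4 : ∑ j ∈ S.erase i, (4 : ℝ) ≤ ∑ j ∈ S.erase i, (if H.Adj i j then (x i + x j) ^ 2 else 0) := by
        refine Finset.sum_le_sum fun j hj => ?_
        have hj' := Finset.mem_of_mem_erase hj
        have hne := Finset.ne_of_mem_erase hj
        rw [if_pos (hadj i hi j hj' hne.symm)]
        simp only [hx, hi, hj', if_true]; norm_num
      have h5 : ∑ j ∈ S.erase i, (if H.Adj i j then (x i + x j) ^ 2 else 0)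
          ≤ ∑ j, (if H.Adj i j then (x i + x j) ^ 2 else 0) := by
        refine Finset.sum_le_sum_of_subset_of_nonneg (Finset.subset_univ _) fun j _ _ => ?_
        split_ifs <;> positivity
      rw [Finset.sum_const, Finset.card_erase_of_mem hi, hSc, nsmul_eq_mul,
        Nat.cast_sub (by omega), Nat.cast_sub (by omega)] at h4
      push_cast at h4
      linarith
    have h6 : ∑ i ∈ S, 4 * ((n : ℝ) - k - 1)
        ≤ ∑ i ∈ S, ∑ j, (if H.Adj i j then (x i + x j) ^ 2 else 0) := Finset.sum_le_sum h3
    have h7 : ∑ i ∈ S, ∑ j, (if H.Adj i j then (x i + x j) ^ 2 else 0)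
        ≤ ∑ i, ∑ j, (if H.Adj i j then (x i + x j) ^ 2 else 0) := by
      refine Finset.sum_le_sum_of_subset_of_nonneg (Finset.subset_univ _) fun j _ _ => ?_
      refine Finset.sum_nonneg fun j _ => ?_
      split_ifs <;> positivity
    rw [Finset.sum_const, hSc, nsmul_eq_mul, Nat.cast_sub (by omega)] at h6
    linarith
  have h8 := (qRad_spec H).2 x
  rw [h1] at h8
  have hp : (0 : ℝ) < (n : ℝ) - k := by
    have : ((k + 1 : ℕ) : ℝ) ≤ n := by exact_mod_cast hkn
    push_cast at this; linarith
  have h9 : (2 * ((n : ℝ) - k - 1)) * ((n : ℝ) - k) ≤ qRad H * ((n : ℝ) - k) := by nlinarith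
  exact le_of_mul_le_mul_right h9 hp

theorem exists_row_bound {V : Type*} [Fintype V] [Nontrivial V] (G : SimpleGraph V)
    (hG : G.Connected) :
    ∃ v, (qRad G - dg G v) * dg G v ≤ ∑ u, (if G.Adj v u then (dg G u : ℝ) else 0) := by
  obtain ⟨x, hx0, hx⟩ := (qRad_spec G).1
  obtain ⟨v, hv⟩ := Finite.exists_max fun v => |x v| / (dg G v : ℝ)
  have hdp : ∀ v, (0 : ℝ) < dg G v := fun v => by exact_mod_cast dg_pos G hG v
  have hxv : 0 < |x v| := by
    refine lt_of_le_of_ne (abs_nonneg _) fun h0 => hx0 ?_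
    ext w
    have := hv w
    rw [← h0, zero_div] at this
    have h2 : |x w| / (dg G w : ℝ) = 0 := le_antisymm this (by positivity)
    rcases div_eq_zero_iff.1 h2 with h | h
    · exact abs_eq_zero.1 h
    · exact absurd h (hdp w).ne'
  refine ⟨v, ?_⟩
  have h1 := congrFun hx v
  rw [qMat_mulVec] at h1
  simp only [Pi.smul_apply, smul_eq_mul] at h1
  have h2 : ∑ j, (if G.Adj v j then x v + x j else 0)
      = dg G v * x v + ∑ j, (if G.Adj v j then x j else 0) := by
    rw [dg_sum, Finset.sum_mul, ← Finset.sum_add_distrib]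
    refine Finset.sum_congr rfl fun j _ => ?_
    split_ifs <;> simp
  have h3 : (qRad G - dg G v) * x v = ∑ j, (if G.Adj v j then x j else 0) := by
    rw [sub_mul, ← h1, h2]; ring
  have h4 : (qRad G - dg G v) * |x v| ≤ ∑ j, (if G.Adj v j then |x j| else 0) := by
    calc (qRad G - dg G v) * |x v| ≤ |qRad G - dg G v| * |x v| :=
          mul_le_mul_of_nonneg_right (le_abs_self _) (abs_nonneg _)
      _ = |∑ j, (if G.Adj v j then x j else 0)| := by rw [← abs_mul, h3]
      _ ≤ ∑ j, |(if G.Adj v j then x j else 0)| := Finset.abs_sum_le_sum_abs _ _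
      _ = ∑ j, (if G.Adj v j then |x j| else 0) := by
          refine Finset.sum_congr rfl fun j _ => ?_
          split_ifs <;> simp
  have h5 : (∑ j, (if G.Adj v j then |x j| else 0)) * dg G v
      ≤ (∑ u, (if G.Adj v u then (dg G u : ℝ) else 0)) * |x v| := by
    rw [Finset.sum_mul, Finset.sum_mul]
    refine Finset.sum_le_sum fun j _ => ?_
    split_ifs
    · have := hv j
      rw [div_le_div_iff₀ (hdp j) (hdp v)] at this
      linarith
    · simp
  have h6 : ((qRad G - dg G v) * dg G v) * |x v|
      ≤ (∑ u, (if G.Adj v u then (dg G u : ℝ) else 0)) * |x v| := by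
    have := mul_le_mul_of_nonneg_right h4 (hdp v).le
    linarith
  exact le_of_mul_le_mul_right h6 hxv

theorem sum_codegree_le {n k : ℕ} (hn : 2 ≤ n) (hkn : 2 * k + 1 ≤ n) (G : SimpleGraph (Fin n)) (hG : G.Connected)
    (hq : 2 * ((n : ℝ) - k - 1) ≤ qRad G) :
    ∑ v, ((n : ℝ) - 1 - dg G v) ≤ 2 * k * ((n : ℝ) - 1) := by
  have : Nontrivial (Fin n) := Fin.nontrivial_iff_two_le.2 hn
  obtain ⟨v, hv⟩ := exists_row_bound G hG
  have hd1 : (1 : ℝ) ≤ dg G v := by exact_mod_cast dg_pos G hG v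
  have hdn : ∀ u, (dg G u : ℝ) + 1 ≤ n := fun u => by
    have := dg_lt G u
    rw [Fintype.card_fin] at this
    exact_mod_cast this
  have hkn' : 2 * (k : ℝ) + 1 ≤ n := by exact_mod_cast hkn
  set d : ℝ := (dg G v : ℝ) with hd
  -- sum of degrees of neighbours
  have e1 : ∑ u, (if G.Adj v u then (dg G u : ℝ) else 0) ≤ d * (n - 1) := by
    rw [hd, dg_sum, Finset.sum_mul]
    refine Finset.sum_le_sum fun u _ => ?_
    split_ifs
    · linarith [hdn u]
    · simp
  have hq' : (2 * ((n : ℝ) - k - 1) - d) * d ≤ ∑ u, (if G.Adj v u then (dg G u : ℝ) else 0) :=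
    le_trans (by nlinarith) hv
  -- lower bound of the total degree
  have e2 : (∑ u, (if G.Adj v u then (dg G u : ℝ) else 0)) + d + ((n : ℝ) - 1 - d) ≤ ∑ u, (dg G u : ℝ) := by
    have e3 : ∑ u, ((if G.Adj v u then (dg G u : ℝ) else 0) + (if u = v then d else 0)
        + (1 - (if u = v then (1 : ℝ) else 0) - (if G.Adj v u then (1 : ℝ) else 0))) ≤ ∑ u, (dg G u : ℝ) := by
      refine Finset.sum_le_sum fun u _ => ?_
      by_cases huv : u = v
      · subst huv
        simp [hd]
      · have : (1 : ℝ) ≤ dg G u := by exact_mod_cast dg_pos G hG u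
        simp only [huv, if_false]
        split_ifs <;> linarith
    rw [Finset.sum_add_distrib, Finset.sum_add_distrib, Finset.sum_sub_distrib,
      Finset.sum_sub_distrib, ← dg_sum] at e3
    rw [← hd] at e3
    simp only [Finset.sum_ite_eq', mem_univ, if_true, Finset.sum_const, card_univ,
      Fintype.card_fin, nsmul_eq_mul, mul_one] at e3
    exact e3
  have e4 : ∑ u, ((n : ℝ) - 1 - dg G u) = n * (n - 1) - ∑ u, (dg G u : ℝ) := by
    rw [Finset.sum_sub_distrib]; simp; ring
  rw [e4]
  have hdn' := hdn v
  rw [← hd] at hdn'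
  have e5 : 2 * ((n : ℝ) - k - 1) - d ≤ n - 1 := by
    have : (2 * ((n : ℝ) - k - 1) - d) * d ≤ (n - 1) * d := by linarith
    exact le_of_mul_le_mul_right this (by linarith)
  nlinarith [mul_nonneg (by linarith : (0:ℝ) ≤ n - 1 - d) (by linarith : (0:ℝ) ≤ 2 * k - (n - 1 - d))]

/-- `G` contains a path with at least `p` vertices. -/
def HasPath {V : Type*} (G : SimpleGraph V) (p : ℕ) : Prop :=
  ∃ l : List V, l.IsChain G.Adj ∧ l.Nodup ∧ p ≤ l.length

theorem exists_forest {V : Type*} (G : SimpleGraph V) (l : List V) (hc : l.IsChain G.Adj)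
    (hn : l.Nodup) : ∃ F : SimpleGraph V, F ≤ G ∧ F.IsAcyclic ∧ (∀ x y, F.Adj x y → x ∈ l) ∧
      l.IsChain F.Adj := by
  induction l with
  | nil => exact ⟨⊥, bot_le, SimpleGraph.isAcyclic_bot, by simp, by simp⟩
  | cons a t ih =>
    cases t with
    | nil => exact ⟨⊥, bot_le, SimpleGraph.isAcyclic_bot, by simp, by simp⟩
    | cons b t =>
      rw [List.isChain_cons_cons] at hc
      rw [List.nodup_cons] at hn
      obtain ⟨F, hFG, hF, hs, hch⟩ := ih hc.2 hn.2
      have hab : a ≠ b := hc.1.ne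
      have hnr : ¬ F.Reachable a b := by
        rintro ⟨p⟩
        obtain ⟨d, _, hd1, _⟩ := p.exists_boundary_dart {a} rfl (by simpa using hab.symm)
        have := hs _ _ d.adj
        rw [Set.mem_singleton_iff] at hd1
        rw [hd1] at this
        exact hn.1 this
      refine ⟨F ⊔ SimpleGraph.edge a b, ?_, hF.sup_edge_of_not_reachable hnr, ?_, ?_⟩
      · refine sup_le hFG ?_
        rw [SimpleGraph.edge_le_iff]
        exact Or.inr hc.1
      · intro x y hxy
        rw [SimpleGraph.sup_adj, SimpleGraph.edge_adj] at hxy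
        rcases hxy with h | ⟨h | h, _⟩
        · exact List.mem_cons_of_mem _ (hs _ _ h)
        · simp [h.1]
        · simp [h.1]
      · rw [List.isChain_cons_cons]
        refine ⟨?_, hch.imp fun x y h => Or.inl h⟩
        rw [SimpleGraph.sup_adj, SimpleGraph.edge_adj]
        exact Or.inr ⟨Or.inl ⟨rfl, rfl⟩, hab⟩

theorem tree_of_path {V : Type*} [Fintype V] (G : SimpleGraph V) (hG : G.Connected) (k : ℕ)
    (hp : HasPath G (Fintype.card V + 2 - k)) (hk : 2 ≤ k) (hkn : k ≤ Fintype.card V) :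
    HasSpanningKEndedTree G k := by
  obtain ⟨l, hc, hn, hlen⟩ := hp
  obtain ⟨F, hFG, hF, -, hch⟩ := exists_forest G l hc hn
  obtain ⟨T, hFT, hTG, hT⟩ : ∃ T, F ≤ T ∧ T ≤ G ∧ T.IsTree := by
    obtain ⟨T, h1, h2, h3⟩ := hG.exists_isTree_le_of_le_of_isAcyclic hFG hF
    exact ⟨T, by assumption, by assumption, by assumption⟩
  refine ⟨T, hTG, hT, ?_⟩
  have hchT : l.IsChain T.Adj := hch.imp fun x y h => hFT h
  cases l with
  | nil => simp at hlen; omega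
  | cons a m' =>
  rcases List.eq_nil_or_concat' m' with rfl | ⟨m, b, rfl⟩
  · simp at hlen; omega
  have hmn : m.Nodup := by
    have := (List.nodup_cons.1 hn).2
    exact (List.nodup_append.1 this).1
  have hsub : (univ.filter fun v => T.degree v = 1) ⊆ univ \ m.toFinset := by
    intro x hx
    simp only [mem_filter, mem_univ, true_and] at hx
    simp only [mem_sdiff, mem_univ, true_and, List.mem_toFinset]
    intro hxm
    obtain ⟨s, t, rfl⟩ := List.append_of_mem hxm
    obtain ⟨s', a', hs'⟩ : ∃ s' a', a :: s = s' ++ [a'] := by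
      rcases List.eq_nil_or_concat' (a :: s) with h | h
      · simp at h
      · exact h
    obtain ⟨b', t', ht'⟩ : ∃ b' t', t ++ [b] = b' :: t' := by
      cases t with
      | nil => exact ⟨b, [], rfl⟩
      | cons c t => exact ⟨c, t ++ [b], rfl⟩
    have hl : a :: (s ++ x :: t ++ [b]) = s' ++ a' :: x :: b' :: t' := by
      have : a :: (s ++ x :: t ++ [b]) = (a :: s) ++ x :: (t ++ [b]) := by simp
      rw [this, hs', ht']; simp
    rw [hl] at hchT hn
    rw [List.isChain_append_cons_cons] at hchT
    have h1 : T.Adj x a' := hchT.2.1.symm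
    have h2 : T.Adj x b' := (List.isChain_cons_cons.1 hchT.2.2).1
    have h3 : a' ≠ b' := by
      have := (List.nodup_append.1 hn).2.1
      rintro rfl
      simp at this
    have : 1 < T.degree x := by
      rw [← SimpleGraph.card_neighborFinset_eq_degree, Finset.one_lt_card]
      exact ⟨a', by simpa using h1, b', by simpa using h2, h3⟩
    omega
  have := Finset.card_le_card hsub
  rw [Finset.card_sdiff_of_subset (Finset.subset_univ _), Finset.card_univ, List.toFinset_card_of_nodup hmn] at this
  simp only [List.length_cons, List.length_append, List.length_nil] at hlen
  omega

/-- indicator -/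
noncomputable def ind (P : Prop) : ℕ := if P then 1 else 0

theorem ind_le (P Q : Prop) (h : ¬ (P ∧ Q)) : ind P + ind Q ≤ 1 := by
  unfold ind
  split_ifs <;> simp_all

theorem cnt_aux {V : Type*} (P Q : V → Prop) (B : List V) : ∀ b : V,
    (∀ X x y Y, b :: B = X ++ x :: y :: Y → ¬ (P x ∧ Q y)) →
    (∀ X x, b :: B = X ++ [x] → ¬ P x) →
    ((b :: B).map fun w => ind (P w)).sum + (B.map fun w => ind (Q w)).sum ≤ B.length := by
  induction B with
  | nil =>
    intro b _ h2
    have := h2 [] b rfl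
    simp [ind, this]
  | cons c t ih =>
    intro b h1 h2
    have := ih c (fun X x y Y h => h1 (b :: X) x y Y (by simp [h]))
      (fun X x h => h2 (b :: X) x (by simp [h]))
    have h3 := ind_le _ _ (h1 [] b c t rfl)
    simp only [List.map_cons, List.sum_cons, List.length_cons] at this ⊢
    omega

theorem half_count {V : Type*} (G : SimpleGraph V) (u v : V) (huv : ¬ G.Adj u v) (A B : List V)
    (hn : (A ++ u :: v :: B).Nodup) (hA : (A ++ [u]).IsChain G.Adj) (hB : (v :: B).IsChain G.Adj)
    (hno : ¬ HasPath G (A ++ u :: v :: B).length) :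
    ((v :: B).map fun w => ind (G.Adj u w) + ind (G.Adj v w)).sum ≤ B.length := by
  have key := cnt_aux (fun w => G.Adj u w) (fun w => G.Adj v w) B v ?_ ?_
  · have h0 : ind (G.Adj v v) = 0 := by simp [ind]
    rw [List.sum_map_add]
    simp only [List.map_cons, List.sum_cons, h0] at key ⊢
    omega
  · rintro X x y Y hX ⟨hux, hvy⟩
    cases X with
    | nil =>
      simp only [List.nil_append, List.cons.injEq] at hX
      rw [← hX.1] at hux; exact huv hux
    | cons v' X' =>
      simp only [List.cons_append, List.cons.injEq] at hX
      obtain ⟨rfl, rfl⟩ := hX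
      apply hno
      refine ⟨A ++ u :: x :: (X'.reverse ++ v :: y :: Y), ?_, ?_, ?_⟩
      · rw [List.isChain_append_cons_cons]
        refine ⟨hA, hux, ?_⟩
        rw [← List.cons_append, List.isChain_append_cons_cons]
        have hB' : (v :: X' ++ x :: y :: Y).IsChain G.Adj := by simpa using hB
        rw [List.isChain_append_cons_cons] at hB'
        refine ⟨?_, hvy, hB'.2.2⟩
        have h1 := hB'.1
        have h2 : x :: X'.reverse ++ [v] = (v :: X' ++ [x]).reverse := by simp
        rw [h2, List.isChain_reverse]
        exact h1.imp fun a b h => h.symm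
      · refine (List.Perm.nodup_iff ?_).1 hn
        refine List.Perm.append_left A (List.Perm.cons u ?_)
        have h1 : v :: (X' ++ x :: y :: Y) = (v :: X' ++ [x]) ++ y :: Y := by simp
        have h2 : x :: (X'.reverse ++ v :: y :: Y) = (v :: X' ++ [x]).reverse ++ y :: Y := by simp
        rw [h1, h2]
        exact List.Perm.append_right _ (List.reverse_perm _).symm
      · simp
  · intro X x hX hux
    apply hno
    refine ⟨A ++ u :: (v :: B).reverse, ?_, ?_, ?_⟩
    · rw [hX]
      have : A ++ u :: (X ++ [x]).reverse = A ++ u :: x :: X.reverse := by simp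
      rw [this, List.isChain_append_cons_cons]
      refine ⟨hA, hux, ?_⟩
      have h2 : x :: X.reverse = (v :: B).reverse := by rw [hX]; simp
      rw [h2, List.isChain_reverse]
      exact hB.imp fun a b h => h.symm
    · refine (List.Perm.nodup_iff ?_).1 hn
      exact List.Perm.append_left A (List.Perm.cons u (List.reverse_perm _).symm)
    · simp

theorem dg_ind {V : Type*} [Fintype V] (G : SimpleGraph V) (v : V) :
    dg G v = ∑ w, ind (G.Adj v w) := by
  simp [dg, ind]

theorem split_count {V : Type*} [Fintype V] (G : SimpleGraph V) (u v : V) (huv : ¬ G.Adj u v)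
    (A B : List V)
    (hn : (A ++ u :: v :: B).Nodup) (hA : (A ++ [u]).IsChain G.Adj) (hB : (v :: B).IsChain G.Adj)
    (hno : ¬ HasPath G (A ++ u :: v :: B).length) :
    dg G u + dg G v + 2 ≤ Fintype.card V := by
  have h1 := half_count G u v huv A B hn hA hB hno
  have h2 := half_count G v u (fun h => huv h.symm) B.reverse A.reverse (by
      have : B.reverse ++ v :: u :: A.reverse = (A ++ u :: v :: B).reverse := by simp
      rw [this, List.nodup_reverse]; exact hn)
    (by
      have : B.reverse ++ [v] = (v :: B).reverse := by simp
      rw [this, List.isChain_reverse]; exact hB.imp fun a b h => h.symm)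
    (by
      have : u :: A.reverse = (A ++ [u]).reverse := by simp
      rw [this, List.isChain_reverse]; exact hA.imp fun a b h => h.symm)
    (by
      have : (B.reverse ++ v :: u :: A.reverse).length = (A ++ u :: v :: B).length := by
        simp; try omega
      rw [this]; exact hno)
  set g : V → ℕ := fun w => ind (G.Adj u w) + ind (G.Adj v w) with hg
  have h3 : ((u :: A.reverse).map g).sum ≤ A.length := by
    have e : (fun w => ind (G.Adj v w) + ind (G.Adj u w)) = g := by
      funext w; exact add_comm _ _
    rw [e, List.length_reverse] at h2
    exact h2
  have h4 : ((A ++ u :: v :: B).map g).sum ≤ A.length + B.length := by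
    have e : (A ++ u :: v :: B).Perm ((u :: A.reverse) ++ (v :: B)) := by
      have : A ++ u :: v :: B = (A ++ [u]) ++ (v :: B) := by simp
      rw [this]
      refine List.Perm.append_right _ ?_
      have h := (List.reverse_perm (A ++ [u])).symm
      simpa using h
    rw [(e.map g).sum_eq, List.map_append, List.sum_append]
    omega
  set l := A ++ u :: v :: B with hl
  have h5 : ∑ w ∈ l.toFinset, g w = (l.map g).sum := List.sum_toFinset g hn
  have h6 : ∑ w ∈ univ \ l.toFinset, g w ≤ ∑ w ∈ univ \ l.toFinset, 1 := by
    refine Finset.sum_le_sum fun w hw => ?_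
    refine ind_le _ _ ?_
    rintro ⟨hu, hv⟩
    simp only [mem_sdiff, mem_univ, true_and, List.mem_toFinset] at hw
    apply hno
    refine ⟨A ++ u :: w :: v :: B, ?_, ?_, ?_⟩
    · rw [List.isChain_append_cons_cons]
      exact ⟨hA, hu, List.isChain_cons_cons.2 ⟨hv.symm, hB⟩⟩
    · have e : (w :: l).Perm (A ++ u :: w :: v :: B) := by
        have h7 : l = (A ++ [u]) ++ v :: B := by simp [hl]
        have h8 : A ++ u :: w :: v :: B = (A ++ [u]) ++ w :: v :: B := by simp
        rw [h7, h8]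
        exact List.perm_middle.symm
      exact e.nodup_iff.1 (List.nodup_cons.2 ⟨hw, hn⟩)
    · simp [hl]
  have h7 : ∑ w, g w = ∑ w ∈ univ \ l.toFinset, g w + ∑ w ∈ l.toFinset, g w :=
    (Finset.sum_sdiff (Finset.subset_univ _)).symm
  have h8 : ∑ w, g w = dg G u + dg G v := by
    rw [dg_ind, dg_ind, ← Finset.sum_add_distrib]
  have h9 : l.length ≤ Fintype.card V := hn.length_le_card
  rw [Finset.sum_const, Finset.card_sdiff_of_subset (Finset.subset_univ _), Finset.card_univ,
    List.toFinset_card_of_nodup hn] at h6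
  have h10 : l.length = A.length + B.length + 2 := by rw [hl]; simp; try omega
  simp only [smul_eq_mul, mul_one] at h6
  omega

theorem closure_count {V : Type*} [Fintype V] (G : SimpleGraph V) (u v : V) (huv : ¬ G.Adj u v)
    (p : ℕ) (hno : ¬ HasPath G p) (hyes : HasPath (G ⊔ SimpleGraph.edge u v) p) :
    dg G u + dg G v + 2 ≤ Fintype.card V := by
  obtain ⟨l, hc, hn, hlen⟩ := hyes
  have hnc : ¬ l.IsChain G.Adj := fun h => hno ⟨l, h, hn, hlen⟩
  rw [List.isChain_iff_forall_rel_of_append_cons_cons] at hnc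
  push Not at hnc
  obtain ⟨x, y, A, B, rfl, hxy⟩ := hnc
  rw [List.isChain_append_cons_cons] at hc
  have hadj : ∀ a b, (G ⊔ SimpleGraph.edge u v).Adj a b → ¬ G.Adj a b →
      (a = u ∧ b = v) ∨ (a = v ∧ b = u) := by
    intro a b h h'
    rw [SimpleGraph.sup_adj, SimpleGraph.edge_adj] at h
    rcases h with h | h
    · exact absurd h h'
    · tauto
  have hxy' := hadj x y hc.2.1 hxy
  have hdis : ∀ a ∈ A ++ [x], ∀ b ∈ y :: B, a ≠ b := by
    have : A ++ x :: y :: B = (A ++ [x]) ++ y :: B := by simp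
    rw [this] at hn
    exact (List.nodup_append.1 hn).2.2
  have hA : (A ++ [x]).IsChain G.Adj := by
    refine List.IsChain.imp_of_mem_imp (fun a b ha hb h => ?_) hc.1
    by_contra hcon
    have h1 := hadj a b h hcon
    have h2 := hdis a ha y (by simp)
    have h3 := hdis b hb y (by simp)
    rcases h1 with ⟨rfl, rfl⟩ | ⟨rfl, rfl⟩ <;> rcases hxy' with ⟨rfl, rfl⟩ | ⟨rfl, rfl⟩ <;> simp_all
  have hB : (y :: B).IsChain G.Adj := by
    refine List.IsChain.imp_of_mem_imp (fun a b ha hb h => ?_) hc.2.2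
    by_contra hcon
    have h1 := hadj a b h hcon
    have h2 := hdis x (by simp) a ha
    have h3 := hdis x (by simp) b hb
    rcases h1 with ⟨rfl, rfl⟩ | ⟨rfl, rfl⟩ <;> rcases hxy' with ⟨rfl, rfl⟩ | ⟨rfl, rfl⟩ <;> simp_all
  have hno' : ¬ HasPath G (A ++ x :: y :: B).length := by
    rintro ⟨l, h1, h2, h3⟩
    exact hno ⟨l, h1, h2, hlen.trans h3⟩
  have := split_count G x y hxy A B hn hA hB hno'
  rcases hxy' with ⟨rfl, rfl⟩ | ⟨rfl, rfl⟩ <;> omega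

theorem low_arith (n k t : ℤ) (hk : 2 ≤ k) (hn1 : 6 * k + 5 ≤ n) (hn2 : 3 * k ^ 2 + 3 * k + 4 ≤ 2 * n)
    (h4 : t + 1 ≤ 4 * k) (h : t * (n - t) + t * (n - 2 * t + 1) ≤ 2 * k * (n - 1)) : t ≤ k := by
  by_contra hcon
  push Not at hcon
  have h8 : 8 * k - 1 ≤ n := by nlinarith [mul_nonneg (by linarith : 0 ≤ k - 2) (by linarith : 0 ≤ k - 2), mul_self_nonneg (k - 3), mul_self_nonneg (k - 4)]
  nlinarith [mul_nonneg (by linarith : 0 ≤ t - (k + 1)) (by linarith : 0 ≤ 4 * k - 1 - t),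
    mul_nonneg (by linarith : 0 ≤ t - (k + 1)) (by linarith : 0 ≤ 2 * n + 1 - 15 * k)]

theorem structure_low {n k : ℕ} (hk : 2 ≤ k) (hn1 : 6 * k + 5 ≤ n)
    (hn2 : 3 * (k : ℤ) ^ 2 + 3 * k + 4 ≤ 2 * n) (G : SimpleGraph (Fin n))
    (hcl : ∀ u v, u ≠ v → ¬ G.Adj u v → dg G u + dg G v + 2 ≤ n)
    (hsum : ∑ v, ((n : ℤ) - 1 - dg G v) ≤ 2 * k * ((n : ℤ) - 1)) :
    ∃ L : Finset (Fin n), L.card ≤ k ∧ ∀ u ∉ L, ∀ v ∉ L, u ≠ v → G.Adj u v := by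
  have hkZ : (2 : ℤ) ≤ k := by exact_mod_cast hk
  have hn1Z : 6 * (k : ℤ) + 5 ≤ n := by exact_mod_cast hn1
  have h8 : 8 * (k : ℤ) - 1 ≤ n := by
    rcases (by omega : k = 2 ∨ k = 3 ∨ 4 ≤ k) with h | h | h
    · subst h; norm_num at hn1Z ⊢; linarith
    · subst h; norm_num at hn1Z ⊢; linarith
    · have : (4 : ℤ) ≤ k := by exact_mod_cast h
      nlinarith
  set L : Finset (Fin n) := univ.filter fun v => 2 * dg G v + 2 ≤ n with hL
  have hclique : ∀ u ∉ L, ∀ v ∉ L, u ≠ v → G.Adj u v := by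
    intro u hu v hv huv
    simp only [hL, mem_filter, mem_univ, true_and] at hu hv
    by_contra hcon
    have := hcl u v huv hcon
    omega
  refine ⟨L, ?_, hclique⟩
  have hdn : ∀ u, (dg G u : ℤ) + 1 ≤ n := fun u => by
    have := dg_lt G u
    rw [Fintype.card_fin] at this
    exact_mod_cast this
  have hsplit : ∑ v, ((n : ℤ) - 1 - dg G v)
      = ∑ v ∈ univ \ L, ((n : ℤ) - 1 - dg G v) + ∑ v ∈ L, ((n : ℤ) - 1 - dg G v) :=
    (Finset.sum_sdiff (Finset.subset_univ L)).symm
  have hR0 : 0 ≤ ∑ v ∈ univ \ L, ((n : ℤ) - 1 - dg G v) :=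
    Finset.sum_nonneg fun v _ => by linarith [hdn v]
  -- step 1
  have h4 : (L.card : ℤ) + 1 ≤ 4 * k := by
    have h1 : ∑ v ∈ L, (n : ℤ) ≤ ∑ v ∈ L, 2 * ((n : ℤ) - 1 - dg G v) := by
      refine Finset.sum_le_sum fun v hv => ?_
      simp only [hL, mem_filter, mem_univ, true_and] at hv
      have : 2 * (dg G v : ℤ) + 2 ≤ n := by exact_mod_cast hv
      linarith
    rw [← Finset.mul_sum, Finset.sum_const, nsmul_eq_mul] at h1
    by_contra hcon
    push Not at hcon
    have : (4 * (k : ℤ)) ≤ L.card := by linarith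
    have := mul_le_mul_of_nonneg_right this (by linarith : (0 : ℤ) ≤ n)
    nlinarith
  set t : ℤ := (L.card : ℤ) with ht
  have hRc : ((univ \ L).card : ℤ) = n - t := by
    rw [Finset.card_sdiff_of_subset (Finset.subset_univ _), Finset.card_univ, Fintype.card_fin,
      Nat.cast_sub]
    simpa using Finset.card_le_univ L
  -- step 2
  have hRd : ∀ v ∉ L, (n : ℤ) - t - 1 ≤ dg G v := by
    intro v hv
    have hs : (univ \ L).erase v ⊆ univ.filter fun u => G.Adj v u := by
      intro u hu
      simp only [mem_erase, mem_sdiff, mem_univ, true_and] at hu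
      simpa using hclique v hv u hu.2 hu.1.symm
    have h1 := Finset.card_le_card hs
    have h2 := Finset.card_erase_add_one (show v ∈ univ \ L by simpa using hv)
    have h3 : ((univ \ L).erase v).card ≤ dg G v := h1
    have : (((univ \ L).erase v).card : ℤ) + 1 = (univ \ L).card := by exact_mod_cast h2
    have : (((univ \ L).erase v).card : ℤ) ≤ dg G v := by exact_mod_cast h3
    linarith
  -- step 3
  have hLd : ∀ w ∈ L, (dg G w : ℤ) + 1 ≤ t := by
    intro w hw
    by_cases hall : ∀ v ∉ L, G.Adj w v
    · have hs : (univ \ L) ⊆ univ.filter fun u => G.Adj w u := by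
        intro u hu
        simp only [mem_sdiff, mem_univ, true_and] at hu
        simpa using hall u hu
      have h1 : (univ \ L).card ≤ dg G w := Finset.card_le_card hs
      have h1' : ((univ \ L).card : ℤ) ≤ dg G w := by exact_mod_cast h1
      simp only [hL, mem_filter, mem_univ, true_and] at hw
      have : 2 * (dg G w : ℤ) + 2 ≤ n := by exact_mod_cast hw
      linarith
    · push Not at hall
      obtain ⟨v, hv, hwv⟩ := hall
      have h1 := hcl w v (by rintro rfl; exact hv hw) hwv
      have h2 := hRd v hv
      have : (dg G w : ℤ) + dg G v + 2 ≤ n := by exact_mod_cast h1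
      linarith
  -- step 4
  have hs1 : t * ((n : ℤ) - t) ≤ ∑ v ∈ L, ((n : ℤ) - 1 - dg G v) := by
    have : ∑ v ∈ L, ((n : ℤ) - t) ≤ ∑ v ∈ L, ((n : ℤ) - 1 - dg G v) :=
      Finset.sum_le_sum fun v hv => by linarith [hLd v hv]
    rwa [Finset.sum_const, nsmul_eq_mul] at this
  have hs2 : t * ((n : ℤ) - 2 * t + 1) ≤ ∑ v ∈ univ \ L, ((n : ℤ) - 1 - dg G v) := by
    have e1 : ∀ v ∈ univ \ L, ∑ w ∈ L, (if G.Adj v w then (0 : ℤ) else 1) ≤ (n : ℤ) - 1 - dg G v := by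
      intro v hv
      simp only [mem_sdiff, mem_univ, true_and] at hv
      have e2 : ∑ w ∈ L, (if G.Adj v w then (0 : ℤ) else 1)
          ≤ ∑ w, ((1 : ℤ) - (if w = v then 1 else 0) - (if G.Adj v w then 1 else 0)) := by
        have e3 : ∑ w ∈ L, (if G.Adj v w then (0 : ℤ) else 1)
            = ∑ w ∈ L, ((1 : ℤ) - (if w = v then 1 else 0) - (if G.Adj v w then 1 else 0)) := by
          refine Finset.sum_congr rfl fun w hw => ?_
          have : w ≠ v := by rintro rfl; exact hv hw
          simp only [this, if_false]
          split_ifs <;> simp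
        rw [e3]
        refine Finset.sum_le_sum_of_subset_of_nonneg (Finset.subset_univ _) fun w _ _ => ?_
        by_cases hw : w = v
        · subst hw; simp
        · simp only [hw, if_false]; split_ifs <;> simp
      refine e2.trans (le_of_eq ?_)
      rw [Finset.sum_sub_distrib, Finset.sum_sub_distrib]
      simp [dg]
    have e4 : ∀ w ∈ L, (n : ℤ) - 2 * t + 1 ≤ ∑ v ∈ univ \ L, (if G.Adj v w then (0 : ℤ) else 1) := by
      intro w hw
      have e5 : ∑ v ∈ univ \ L, (if G.Adj v w then (0 : ℤ) else 1)
          = ∑ v ∈ univ \ L, (1 - (if G.Adj w v then (1 : ℤ) else 0)) := by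
        refine Finset.sum_congr rfl fun v _ => ?_
        rw [G.adj_comm v w]; split_ifs <;> simp
      have e6 : ∑ v ∈ univ \ L, (if G.Adj w v then (1 : ℤ) else 0) ≤ ∑ v, (if G.Adj w v then (1 : ℤ) else 0) :=
        Finset.sum_le_sum_of_subset_of_nonneg (Finset.subset_univ _) fun v _ _ => by
          split_ifs <;> simp
      have e7 : ∑ v, (if G.Adj w v then (1 : ℤ) else 0) = dg G w := by simp [dg]
      rw [e5, Finset.sum_sub_distrib, Finset.sum_const, nsmul_eq_mul, mul_one, hRc]
      linarith [hLd w hw]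
    calc t * ((n : ℤ) - 2 * t + 1) = ∑ w ∈ L, ((n : ℤ) - 2 * t + 1) := by
          rw [Finset.sum_const, nsmul_eq_mul]
      _ ≤ ∑ w ∈ L, ∑ v ∈ univ \ L, (if G.Adj v w then (0 : ℤ) else 1) := Finset.sum_le_sum e4
      _ = ∑ v ∈ univ \ L, ∑ w ∈ L, (if G.Adj v w then (0 : ℤ) else 1) := Finset.sum_comm
      _ ≤ _ := Finset.sum_le_sum e1
  have := low_arith n k t hkZ hn1Z hn2 h4 (by linarith)
  rw [ht] at this
  exact_mod_cast this

/-- a path through the whole clique with prescribed ends -/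
theorem clique_path {V : Type*} (G : SimpleGraph V) (L : Finset V)
    (hR : ∀ u ∉ L, ∀ v ∉ L, u ≠ v → G.Adj u v) (S : Finset V) (hS : ∀ x ∈ S, x ∉ L) :
    S.toList.IsChain G.Adj := by
  refine List.Pairwise.isChain ?_
  have := S.nodup_toList
  refine List.Pairwise.imp_of_mem ?_ this
  intro a b ha hb hab
  exact hR a (hS a (by simpa using ha)) b (hS b (by simpa using hb)) hab

theorem crossing {V : Type*} (G : SimpleGraph V) (hG : G.Connected) (S : Set V) (a b : V)
    (ha : a ∈ S) (hb : b ∉ S) : ∃ x y, x ∈ S ∧ y ∉ S ∧ G.Adj x y := by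
  obtain ⟨p⟩ := hG.preconnected a b
  obtain ⟨d, _, hd1, hd2⟩ := p.exists_boundary_dart S ha hb
  exact ⟨_, _, hd1, hd2, d.adj⟩

theorem cons_clique_chain {V : Type*} [Fintype V] [DecidableEq V] (G : SimpleGraph V) (L : Finset V)
    (hR : ∀ u ∉ L, ∀ v ∉ L, u ≠ v → G.Adj u v) (r : V) (hr : r ∉ L) :
    (r :: ((univ \ L).erase r).toList).IsChain G.Adj := by
  refine List.Pairwise.isChain ?_
  rw [List.pairwise_cons]
  constructor
  · intro a ha
    simp only [mem_toList, mem_erase, mem_sdiff, mem_univ, true_and] at ha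
    exact hR r hr a ha.2 ha.1.symm
  · refine List.Pairwise.imp_of_mem ?_ ((univ \ L).erase r).nodup_toList
    intro a b ha hb hab
    simp only [mem_toList, mem_erase, mem_sdiff, mem_univ, true_and] at ha hb
    exact hR a ha.2 b hb.2 hab

theorem structure_high {n k : ℕ} (hk : 2 ≤ k) (hkn : k + 2 ≤ n) (G : SimpleGraph (Fin n))
    (hG : G.Connected) (hno : ¬ HasPath G (n + 2 - k)) (L : Finset (Fin n)) (hLk : L.card ≤ k)
    (hR : ∀ u ∉ L, ∀ v ∉ L, u ≠ v → G.Adj u v) :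
    L.card = k ∧ ∃ r ∉ L, (∀ w ∈ L, G.Adj w r) ∧ ∀ w ∈ L, ∀ x, G.Adj w x → x = r := by
  have hRc : (univ \ L).card = n - L.card := by
    rw [Finset.card_sdiff_of_subset (Finset.subset_univ _), Finset.card_univ, Fintype.card_fin]
  have hLne : L.Nonempty := by
    by_contra hcon
    rw [Finset.not_nonempty_iff_eq_empty] at hcon
    apply hno
    refine ⟨(univ \ L).toList, clique_path G L hR _ (by simp), Finset.nodup_toList _, ?_⟩
    rw [Finset.length_toList, hRc, hcon]; simp; omega
  obtain ⟨w0, hw0⟩ := hLne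
  obtain ⟨r0, hr0⟩ : ∃ r0, r0 ∉ L := by
    have : 0 < (univ \ L).card := by omega
    obtain ⟨r0, h⟩ := Finset.card_pos.1 this
    exact ⟨r0, by simpa using h⟩
  -- the basic list
  have hlen : ∀ r ∉ L, (r :: ((univ \ L).erase r).toList).length = n - L.card := by
    intro r hr
    have := Finset.card_erase_add_one (show r ∈ univ \ L by simpa using hr)
    simp only [List.length_cons, Finset.length_toList]
    omega
  have hnd : ∀ r ∉ L, (r :: ((univ \ L).erase r).toList).Nodup := by
    intro r hr
    rw [List.nodup_cons]
    exact ⟨by simp, Finset.nodup_toList _⟩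
  have hmem : ∀ r ∉ L, ∀ w ∈ L, w ∉ (r :: ((univ \ L).erase r).toList) := by
    intro r hr w hw h
    simp only [List.mem_cons, mem_toList, mem_erase, mem_sdiff, mem_univ, true_and] at h
    rcases h with rfl | h
    · exact hr hw
    · exact h.2 hw
  have hcard : L.card = k := by
    by_contra hcon
    obtain ⟨w, r, hw, hr, hwr⟩ := crossing G hG (L : Set (Fin n)) w0 r0 hw0 hr0
    have hr' : r ∉ L := hr
    apply hno
    refine ⟨w :: r :: ((univ \ L).erase r).toList, ?_, ?_, ?_⟩
    · exact List.isChain_cons_cons.2 ⟨hwr, cons_clique_chain G L hR r hr⟩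
    · exact List.nodup_cons.2 ⟨hmem r hr' w hw, hnd r hr'⟩
    · rw [List.length_cons, hlen r hr']; omega
  refine ⟨hcard, ?_⟩
  -- no two-step tail
  have hA : ∀ a ∈ L, ∀ b ∈ L, ∀ r ∉ L, G.Adj b a → ¬ G.Adj a r := by
    intro a ha b hb r hr hba har
    apply hno
    refine ⟨b :: a :: r :: ((univ \ L).erase r).toList, ?_, ?_, ?_⟩
    · exact List.isChain_cons_cons.2 ⟨hba, List.isChain_cons_cons.2 ⟨har, cons_clique_chain G L hR r hr⟩⟩
    · refine List.nodup_cons.2 ⟨?_, List.nodup_cons.2 ⟨hmem r hr a ha, hnd r hr⟩⟩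
      rw [List.mem_cons]
      rintro (h | h)
      · exact hba.ne h
      · exact hmem r hr b hb h
    · rw [List.length_cons, List.length_cons, hlen r hr]; omega
  -- no two disjoint edges
  have hB : ∀ a ∈ L, ∀ b ∈ L, a ≠ b → ∀ r ∉ L, ∀ s ∉ L, r ≠ s → G.Adj a r → ¬ G.Adj b s := by
    intro a ha b hb hab r hr s hs hrs har hbs
    apply hno
    have hS : ((univ \ L).erase r).erase s ⊆ univ \ L :=
      (Finset.erase_subset _ _).trans (Finset.erase_subset _ _)
    refine ⟨a :: r :: ((((univ \ L).erase r).erase s).toList ++ [s, b]), ?_, ?_, ?_⟩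
    · refine List.isChain_cons_cons.2 ⟨har, ?_⟩
      have e : r :: ((((univ \ L).erase r).erase s).toList ++ [s, b])
          = (r :: (((univ \ L).erase r).erase s).toList) ++ s :: b :: [] := by simp
      rw [e, List.isChain_append_cons_cons]
      refine ⟨?_, hbs.symm, by simp⟩
      refine List.Pairwise.isChain ?_
      have hnd2 : (r :: (((univ \ L).erase r).erase s).toList ++ [s]).Nodup := by
        simp [List.nodup_append, Finset.nodup_toList, hrs]
        tauto
      refine List.Pairwise.imp_of_mem ?_ hnd2
      have hm : ∀ x ∈ (r :: (((univ \ L).erase r).erase s).toList ++ [s]), x ∉ L := by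
        intro x hx
        simp only [List.cons_append, List.mem_cons, List.mem_append, mem_toList, List.not_mem_nil,
          or_false] at hx
        rcases hx with rfl | hx | rfl
        · exact hr
        · have := hS hx; simpa using this
        · exact hs
      intro x y hx hy hxy
      exact hR x (hm x hx) y (hm y hy) hxy
    · have har' : a ≠ r := har.ne
      have hbs' : b ≠ s := hbs.ne
      have has' : a ≠ s := by rintro rfl; exact hs ha
      have hbr' : r ≠ b := by rintro rfl; exact hr hb
      simp [List.nodup_append, Finset.nodup_toList, hrs, har', has', hab, hbr', hbs'.symm, ha, hb]
      try (intro x hx1 hx2 hx3; exact ⟨hx1, by rintro rfl; exact hx3 hb⟩)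
    · have h1 := Finset.card_erase_add_one (show r ∈ univ \ L by simpa using hr)
      have h2 := Finset.card_erase_add_one (show s ∈ (univ \ L).erase r by simp [hs, hrs.symm])
      simp only [List.length_cons, List.length_append, Finset.length_toList, List.length_nil]
      omega
  -- every vertex of L has a neighbour outside L
  have hC : ∀ w ∈ L, ∃ r ∉ L, G.Adj w r := by
    by_contra hcon
    push Not at hcon
    obtain ⟨w, hw, hwr⟩ := hcon
    obtain ⟨b, a, hb, ha, hba⟩ := crossing G hG {w | w ∈ L ∧ ∀ r ∉ L, ¬ G.Adj w r} w r0 ⟨hw, hwr⟩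
      (fun h => hr0 h.1)
    have haL : a ∈ L := by
      by_contra h
      exact hb.2 a h hba
    have : ∃ r ∉ L, G.Adj a r := by
      by_contra h
      push Not at h
      exact ha ⟨haL, h⟩
    obtain ⟨r, hr, har⟩ := this
    exact hA a haL b hb.1 r hr hba har
  have hD : ∀ a ∈ L, ∀ b ∈ L, ¬ G.Adj a b := by
    intro a ha b hb hab
    obtain ⟨r, hr, hbr⟩ := hC b hb
    exact hA b hb a ha r hr hab hbr
  obtain ⟨r, hr, hwr⟩ := hC w0 hw0
  have hE : ∀ w ∈ L, w ≠ w0 → ∀ x, G.Adj w x → x = r := by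
    intro w hw hne x hwx
    by_contra hxr
    have hx : x ∉ L := fun h => hD w hw x h hwx
    exact hB w0 hw0 w hw hne.symm r hr x hx (fun h => hxr h.symm) hwr hwx
  obtain ⟨w1, hw1, hw10⟩ : ∃ w1 ∈ L, w1 ≠ w0 := Finset.exists_mem_ne (by omega) w0
  have hw1r : G.Adj w1 r := by
    obtain ⟨x, hx, hxx⟩ := hC w1 hw1
    rwa [hE w1 hw1 hw10 x hxx] at hxx
  refine ⟨r, hr, ?_, ?_⟩
  · intro w hw
    by_cases h : w = w0
    · rw [h]; exact hwr
    · obtain ⟨x, hx, hxx⟩ := hC w hw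
      rwa [hE w hw h x hxx] at hxx
  · intro w hw x hwx
    by_cases h : w = w0
    · subst h
      by_contra hxr
      have hx : x ∉ L := fun h => hD w hw x h hwx
      exact hB w1 hw1 w hw hw10 r hr x hx (fun h => hxr h.symm) hw1r hwx
    · exact hE w hw h x hwx

theorem iso_of_structure {n k : ℕ} (hkn : k + 1 ≤ n) (G : SimpleGraph (Fin n))
    (L : Finset (Fin n)) (hLk : L.card = k)
    (hR : ∀ u ∉ L, ∀ v ∉ L, u ≠ v → G.Adj u v) (r : Fin n) (hr : r ∉ L)
    (h1 : ∀ w ∈ L, G.Adj w r) (h2 : ∀ w ∈ L, ∀ x, G.Adj w x → x = r) :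
    Nonempty (G ≃g oneJoinCliquePlusIso n k) := by
  let f : Fin n → Fin 3 := fun i => if i = r then 0 else if i ∈ L then 2 else 1
  let g : Fin n → Fin 3 := fun i => if i.val = 0 then 0 else if i.val < n - k then 1 else 2
  have hf0 : ∀ i, f i = 0 ↔ i = r := by intro i; simp only [f]; split_ifs <;> simp_all
  have hf2 : ∀ i, f i = 2 ↔ i ∈ L := by
    intro i; simp only [f]; split_ifs with h h' <;> simp_all
  have hg0 : ∀ i, g i = 0 ↔ i.val = 0 := by intro i; simp only [g]; split_ifs <;> simp_all
  have hg2 : ∀ i, g i = 2 ↔ n - k ≤ i.val := by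
    intro i; simp only [g]; split_ifs
    · simp; omega
    · simp; omega
    · simp; omega
  have c0 : (univ.filter fun i => f i = 0).card = 1 := by
    rw [Finset.card_eq_one]
    exact ⟨r, by ext i; simp only [mem_filter, mem_univ, true_and, mem_singleton, hf0]⟩
  have c2 : (univ.filter fun i => f i = 2).card = k := by
    simp only [hf2]; simpa using hLk
  have d0 : (univ.filter fun i => g i = 0).card = 1 := by
    simp only [hg0]
    rw [Finset.card_eq_one]
    refine ⟨⟨0, by omega⟩, ?_⟩
    ext i; simp [Fin.ext_iff]
  have d2 : (univ.filter fun i => g i = 2).card = k := by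
    simp only [hg2]
    have h3 : (univ.filter fun i : Fin n => i.val < n - k).card = n - k := by
      rw [Fin.card_filter_val_lt]; omega
    have h4 := Finset.card_filter_add_card_filter_not (s := (univ : Finset (Fin n)))
      (fun i : Fin n => i.val < n - k)
    simp only [not_lt, Finset.card_univ, Fintype.card_fin] at h4
    omega
  have tot : ∀ F : Fin n → Fin 3, (univ.filter fun i => F i = 0).card
      + (univ.filter fun i => F i = 1).card + (univ.filter fun i => F i = 2).card = n := by
    intro F
    have := Finset.card_eq_sum_card_fiberwise (f := F) (s := univ) (t := univ) (by simp)
    rw [Fin.sum_univ_three] at this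
    simp only [Finset.card_univ, Fintype.card_fin] at this
    exact this.symm
  have tf := tot f
  have tg := tot g
  have hc : ∀ c : Fin 3, (univ.filter fun i => f i = c).card = (univ.filter fun i => g i = c).card := by
    intro c
    fin_cases c
    · exact c0.trans d0.symm
    · show (univ.filter fun i => f i = 1).card = (univ.filter fun i => g i = 1).card
      omega
    · exact c2.trans d2.symm
  have he : ∀ c : Fin 3, Nonempty ({i // f i = c} ≃ {i // g i = c}) := by
    intro c
    rw [← Fintype.card_eq, Fintype.card_subtype, Fintype.card_subtype]
    exact hc c
  let e : Fin n ≃ Fin n := Equiv.ofFiberEquiv (f := f) (g := g) fun c => (he c).some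
  have hge : ∀ i, g (e i) = f i := fun i => Equiv.ofFiberEquiv_map _ i
  refine ⟨⟨e, ?_⟩⟩
  intro a b
  show (oneJoinCliquePlusIso n k).Adj (e a) (e b) ↔ G.Adj a b
  rw [oneJoinCliquePlusIso, SimpleGraph.fromRel_adj]
  have p0 : ∀ i, (e i).val = 0 ↔ i = r := fun i => by rw [← hg0, hge, hf0]
  have p2 : ∀ i, (e i).val < n - k ↔ i ∉ L := fun i => by
    rw [← not_le, ← hg2, hge, hf2]
  rw [p0, p0, p2, p2, e.injective.ne_iff]
  constructor
  · rintro ⟨hab, h⟩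
    have key : ∀ y, r ≠ y → G.Adj r y := by
      intro y hy
      by_cases hyL : y ∈ L
      · exact (h1 y hyL).symm
      · exact hR r hr y hyL hy
    rcases h with (rfl | h) | (rfl | h)
    · exact key b hab
    · exact hR a h.1 b h.2 hab
    · exact (key a hab.symm).symm
    · exact hR a h.2 b h.1 hab
  · intro hab
    refine ⟨hab.ne, ?_⟩
    by_cases ha : a ∈ L
    · exact Or.inr (Or.inl (h2 a ha b hab))
    · by_cases hb : b ∈ L
      · exact Or.inl (Or.inl (h2 b hb a hab.symm))
      · exact Or.inl (Or.inr ⟨ha, hb⟩)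

/-- **Theorem (signless Laplacian spectral radius and spanning `k`-ended trees).**
Let `k ≥ 2` and let `G` be a connected graph of order
`n ≥ max {6k+5, (3/2)k² + (3/2)k + 2}`.  If `q(G) ≥ q(K₁ ∨ (K_{n-k-1} + kK₁))`,
then `G` has a spanning `k`-ended-tree unless `G ≅ K₁ ∨ (K_{n-k-1} + kK₁)`. -/
theorem signless_laplacian_spanning_k_ended_tree {n k : ℕ} (hk : 2 ≤ k)
    (hn1 : 6 * k + 5 ≤ n)
    (hn2 : 3 / 2 * (k : ℝ) ^ 2 + 3 / 2 * k + 2 ≤ (n : ℝ))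
    (G : SimpleGraph (Fin n)) (hG : G.Connected)
    (hq : qRad (oneJoinCliquePlusIso n k) ≤ qRad G) :
    HasSpanningKEndedTree G k ∨ Nonempty (G ≃g oneJoinCliquePlusIso n k) := by
  by_cases hpath : HasPath G (n + 2 - k)
  · left
    exact tree_of_path G hG k (by simpa using hpath) hk (by simp; omega)
  right
  have : Nonempty (Fin n) := ⟨⟨0, by omega⟩⟩
  -- an edge-maximal supergraph without a long path
  obtain ⟨G', hGG', hmax⟩ := Finite.exists_le_maximal
    (p := fun F : SimpleGraph (Fin n) => ¬ HasPath F (n + 2 - k)) hpath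
  have hG' : G'.Connected := hG.mono hGG'
  have hno : ¬ HasPath G' (n + 2 - k) := hmax.prop
  have hcl : ∀ u v, u ≠ v → ¬ G'.Adj u v → dg G' u + dg G' v + 2 ≤ n := by
    intro u v huv hadj
    have hyes : HasPath (G' ⊔ SimpleGraph.edge u v) (n + 2 - k) := by
      by_contra hcon
      have := hmax.le_of_ge hcon le_sup_left
      apply hadj
      apply this
      rw [SimpleGraph.sup_adj, SimpleGraph.edge_adj]
      exact Or.inr ⟨Or.inl ⟨rfl, rfl⟩, huv⟩
    have := closure_count G' u v hadj _ hno hyes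
    simpa using this
  have hsumR := sum_codegree_le (n := n) (k := k) (by omega) (by omega) G hG
    ((qRad_ext_lower (by omega)).trans hq)
  have hsum : ∑ v, ((n : ℤ) - 1 - dg G' v) ≤ 2 * k * ((n : ℤ) - 1) := by
    have h1 : ∑ v, ((n : ℤ) - 1 - dg G v) ≤ 2 * k * ((n : ℤ) - 1) := by exact_mod_cast hsumR
    refine le_trans (Finset.sum_le_sum fun v _ => ?_) h1
    have : dg G v ≤ dg G' v := by
      unfold dg
      refine Finset.card_le_card fun u hu => ?_
      simp only [mem_filter, mem_univ, true_and] at hu ⊢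
      exact hGG' hu
    have : (dg G v : ℤ) ≤ dg G' v := by exact_mod_cast this
    linarith
  have hn2' : 3 * (k : ℤ) ^ 2 + 3 * k + 4 ≤ 2 * n := by
    have : 3 * (k : ℝ) ^ 2 + 3 * k + 4 ≤ 2 * n := by linarith
    exact_mod_cast this
  obtain ⟨L, hLk, hR⟩ := structure_low hk hn1 hn2' G' hcl hsum
  obtain ⟨hcard, r, hr, h1, h2⟩ := structure_high hk (by omega) G' hG' hno L hLk hR
  obtain ⟨e⟩ := iso_of_structure (by omega) G' L hcard hR r hr h1 h2
  rcases eq_or_lt_of_le hGG' with heq | hlt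
  · exact ⟨by rw [heq]; exact e⟩
  · have h3 := qRad_lt G G' hG hlt
    have h4 := qRad_le_of_iso G' _ e
    linarith
end
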